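/- Let B₁, B₂ be von Neumann algebras and φ: B₁ → B₂ a *-isomorphism. Let X₁ be a right pre-Hilbert B₁-module and X₂ a right pre-Hilbert B₂-module. If κ: X₁ → X₂ is a bounded linear map satisfying κ(x b) = κ(x) φ(b) for all x ∈ X₁ and b ∈ B₁, then there exists a unique bounded linear map κ̄: X̄₁ → X̄₂ between the self-dual completions extending κ; it satisfies ‖κ̄‖ = ‖κ‖ and κ̄(x b) = κ̄(x) φ(b) for all x ∈ X̄₁, b ∈ B₁. Moreover, if κ is an isometric surjection, then so is κ̄. -/

import Mathlib

/-!
Common framework for formalizing "Morita theory for dynamical von Neumann algebras".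

We work with concrete von Neumann algebras: subsets of `B(H)` for a complex Hilbert
space `H`, which are star-closed and equal to their double commutant.  Since Mathlib
has no σ-weak topology, we use the weak operator topology; recall that on convex sets
(all sets we close are linear subspaces) the WOT closure coincides with the σ-weak
closure, and a linear map between von Neumann algebras is normal iff it is
WOT-continuous on bounded sets.

Since Mathlib has no Hilbert space tensor product, we quantify over a `TensorTheory`:
a package providing, for bundled Hilbert spaces `H, K`, a Hilbert space `T H K`
together with the maps `a ⊗ b` on operators, `ξ ⊗ η` on vectors (with the inner
product law and density, which pins the structure down uniquely), tensor products of
(normal) maps, slice maps, and the associativity/commutativity/functoriality unitaries.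

A locally compact quantum group is encoded via its von Neumann algebra `L^∞(𝔾)`,
the dual algebra `L^∞(𝔾̌)`, the multiplicative unitaries `V, W, V̌` (with the pentagon
equation and the implementation of the coproducts), and the map `x ↦ J̌ x* J̌`
(whose restriction to `L^∞(𝔾)` is the unitary antipode `R`).
-/

noncomputable section

namespace Paper

open Set
open scoped ComplexOrder

notation "⟪" x ", " y "⟫" => (inner ℂ x y : ℂ)

/-- A bundled complex Hilbert space. -/
structure HilbS : Type 1 where
  carrier : Type
  [nacg : NormedAddCommGroup carrier]
  [ips : InnerProductSpace ℂ carrier]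
  [cs : CompleteSpace carrier]

attribute [instance] HilbS.nacg HilbS.ips HilbS.cs

/-- The bounded operators on a Hilbert space. -/
abbrev B (H : HilbS) : Type := H.carrier →L[ℂ] H.carrier

/-- The weak operator topology on `B(H)`. -/
def wotTop (H : HilbS) : TopologicalSpace (B H) :=
  TopologicalSpace.induced
    (fun (T : B H) => fun p : H.carrier × H.carrier => ⟪p.1, T p.2⟫) inferInstance

/-- WOT-closure.  On convex sets this is the σ-weak closure. -/
def wClosure {H : HilbS} (S : Set (B H)) : Set (B H) := @closure _ (wotTop H) S

/-- σ-weakly closed linear span. -/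
def spanClosure {H : HilbS} (S : Set (B H)) : Set (B H) :=
  wClosure ((Submodule.span ℂ S : Submodule ℂ (B H)) : Set (B H))

/-- Normality (σ-weak continuity) of a map on a subset `S ⊆ B(H)`: continuity for the
weak operator topologies on all bounded parts of `S` (for bounded linear maps this is
equivalent to σ-weak continuity). -/
def NormalOn {H K : HilbS} (f : B H → B K) (S : Set (B H)) : Prop :=
  ∀ r : ℝ, @ContinuousOn _ _ (wotTop H) (wotTop K) f (S ∩ Metric.closedBall 0 r)

/-- Normality of a functional. -/
def NormalFunOn {H : HilbS} (f : B H → ℂ) (S : Set (B H)) : Prop :=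
  ∀ r : ℝ, @ContinuousOn _ _ (wotTop H) inferInstance f (S ∩ Metric.closedBall 0 r)

/-- The commutant of a set of operators. -/
def commutant {H : HilbS} (S : Set (B H)) : Set (B H) := Set.centralizer S

/-- A (concrete) von Neumann algebra: a star-closed set of operators equal to its
double commutant. -/
def IsVNA {H : HilbS} (M : Set (B H)) : Prop :=
  (∀ x ∈ M, star x ∈ M) ∧ commutant (commutant M) = M

/-- A self-adjoint projection. -/
def IsSAProj {H : HilbS} (p : B H) : Prop := p * p = p ∧ star p = p

/-- A full projection of `M`: the σ-weakly closed ideal `[M p M]` is all of `M`. -/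
def IsFullProj {H : HilbS} (M : Set (B H)) (p : B H) : Prop :=
  p ∈ M ∧ IsSAProj p ∧ spanClosure {z | ∃ a ∈ M, ∃ b ∈ M, z = a * p * b} = M

/-- A star-algebra homomorphism defined on `M ⊆ B(H)`, with "unit" `e` sent to `e'`. -/
structure IsStarHomOn {H K : HilbS} (M : Set (B H)) (e : B H) (e' : B K)
    (f : B H → B K) : Prop where
  map_add : ∀ x ∈ M, ∀ y ∈ M, f (x + y) = f x + f y
  map_smul : ∀ (c : ℂ), ∀ x ∈ M, f (c • x) = c • f x
  map_mul : ∀ x ∈ M, ∀ y ∈ M, f (x * y) = f x * f y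
  map_star : ∀ x ∈ M, f (star x) = star (f x)
  map_unit : f e = e'

/-- An anti-multiplicative star homomorphism on `M ⊆ B(H)`. -/
structure IsStarAntiHomOn {H K : HilbS} (M : Set (B H)) (e : B H) (e' : B K)
    (f : B H → B K) : Prop where
  map_add : ∀ x ∈ M, ∀ y ∈ M, f (x + y) = f x + f y
  map_smul : ∀ (c : ℂ), ∀ x ∈ M, f (c • x) = c • f x
  map_mul : ∀ x ∈ M, ∀ y ∈ M, f (x * y) = f y * f x
  map_star : ∀ x ∈ M, f (star x) = star (f x)
  map_unit : f e = e'

/-- The corner `pMp`. -/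
def corner {H : HilbS} (M : Set (B H)) (p : B H) : Set (B H) := {x ∈ M | x = p * x * p}

/-- Conjugation of an operator by a unitary (linear isometric equivalence). -/
def conjOp {X Y : Type} [NormedAddCommGroup X] [InnerProductSpace ℂ X]
    [NormedAddCommGroup Y] [InnerProductSpace ℂ Y]
    (u : X ≃ₗᵢ[ℂ] Y) (a : X →L[ℂ] X) : Y →L[ℂ] Y :=
  (u.toLinearIsometry.toContinuousLinearMap.comp a).comp
    u.symm.toLinearIsometry.toContinuousLinearMap

/-- A theory of Hilbert space tensor products: the data of binary tensor products of
Hilbert spaces, elementary tensors of operators and vectors (with the inner product law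
and density of elementary tensors, which determine everything uniquely), tensor
products of maps, slice maps, and the canonical associativity/commutativity/congruence
unitaries. -/
structure TensorTheory : Type 1 where
  T : HilbS → HilbS → HilbS
  tmul : ∀ {H K : HilbS}, B H → B K → B (T H K)
  tvec : ∀ {H K : HilbS}, H.carrier → K.carrier → (T H K).carrier
  tmap : ∀ {H K H' K' : HilbS}, (B H → B H') → (B K → B K') → B (T H K) → B (T H' K')
  sliceL : ∀ {H K : HilbS}, (B H → ℂ) → B (T H K) → B K
  sliceR : ∀ {H K : HilbS}, (B K → ℂ) → B (T H K) → B H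
  assoc : ∀ (H K L : HilbS), ((T (T H K) L).carrier ≃ₗᵢ[ℂ] (T H (T K L)).carrier)
  comm : ∀ (H K : HilbS), ((T H K).carrier ≃ₗᵢ[ℂ] (T K H).carrier)
  congrL : ∀ {H H' : HilbS} (L : HilbS),
    (H.carrier ≃ₗᵢ[ℂ] H'.carrier) → ((T H L).carrier ≃ₗᵢ[ℂ] (T H' L).carrier)
  congrR : ∀ (L : HilbS) {H H' : HilbS},
    (H.carrier ≃ₗᵢ[ℂ] H'.carrier) → ((T L H).carrier ≃ₗᵢ[ℂ] (T L H').carrier)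
  tmul_add_left : ∀ {H K : HilbS} (a b : B H) (c : B K), tmul (a + b) c = tmul a c + tmul b c
  tmul_add_right : ∀ {H K : HilbS} (a : B H) (b c : B K), tmul a (b + c) = tmul a b + tmul a c
  tmul_smul_left : ∀ {H K : HilbS} (z : ℂ) (a : B H) (c : B K), tmul (z • a) c = z • tmul a c
  tmul_smul_right : ∀ {H K : HilbS} (z : ℂ) (a : B H) (c : B K), tmul a (z • c) = z • tmul a c
  tmul_mul : ∀ {H K : HilbS} (a a' : B H) (b b' : B K),
    tmul a b * tmul a' b' = tmul (a * a') (b * b')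
  tmul_star : ∀ {H K : HilbS} (a : B H) (b : B K), star (tmul a b) = tmul (star a) (star b)
  tmul_one : ∀ {H K : HilbS}, tmul (1 : B H) (1 : B K) = 1
  tmul_apply : ∀ {H K : HilbS} (a : B H) (b : B K) (ξ : H.carrier) (η : K.carrier),
    tmul a b (tvec ξ η) = tvec (a ξ) (b η)
  tvec_inner : ∀ {H K : HilbS} (ξ ξ' : H.carrier) (η η' : K.carrier),
    ⟪tvec ξ η, tvec ξ' η'⟫ = ⟪ξ, ξ'⟫ * ⟪η, η'⟫
  tvec_dense : ∀ (H K : HilbS),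
    (Submodule.span ℂ
      (Set.image2 (fun (ξ : H.carrier) (η : K.carrier) => tvec ξ η)
        univ univ)).topologicalClosure = ⊤
  tmap_tmul : ∀ {H K H' K' : HilbS} (f : B H → B H') (g : B K → B K') (a : B H) (b : B K),
    tmap f g (tmul a b) = tmul (f a) (g b)
  sliceL_tmul : ∀ {H K : HilbS} (ω : B H → ℂ) (a : B H) (b : B K),
    sliceL ω (tmul a b) = ω a • b
  sliceR_tmul : ∀ {H K : HilbS} (ω : B K → ℂ) (a : B H) (b : B K),
    sliceR ω (tmul a b) = ω b • a
  assoc_conj : ∀ {H K L : HilbS} (a : B H) (b : B K) (c : B L),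
    conjOp (assoc H K L) (tmul (tmul a b) c) = tmul a (tmul b c)
  comm_conj : ∀ {H K : HilbS} (a : B H) (b : B K),
    conjOp (comm H K) (tmul a b) = tmul b a
  congrL_conj : ∀ {H H' L : HilbS} (u : H.carrier ≃ₗᵢ[ℂ] H'.carrier) (a : B H) (c : B L),
    conjOp (congrL L u) (tmul a c) = tmul (conjOp u a) c
  congrR_conj : ∀ {H H' L : HilbS} (u : H.carrier ≃ₗᵢ[ℂ] H'.carrier) (c : B L) (a : B H),
    conjOp (congrR L u) (tmul c a) = tmul c (conjOp u a)

namespace TensorTheory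

variable (Θ : TensorTheory)

/-- The von Neumann tensor product `M ⊗̄ N` (as a set: the σ-weakly closed span of
elementary tensors; for unitally embedded von Neumann algebras this is `M ⊗̄ N`). -/
def tensorSet {H K : HilbS} (M : Set (B H)) (N : Set (B K)) : Set (B (Θ.T H K)) :=
  spanClosure (Set.image2 (fun (a : B H) (b : B K) => Θ.tmul a b) M N)

/-- leg `12` of an operator on `H1 ⊗ H2` inside `(H1 ⊗ H2) ⊗ H3`. -/
def leg12 {H1 H2 : HilbS} (H3 : HilbS) (x : B (Θ.T H1 H2)) : B (Θ.T (Θ.T H1 H2) H3) :=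
  Θ.tmul x 1

/-- leg `23` of an operator on `H2 ⊗ H3` inside `(H1 ⊗ H2) ⊗ H3`. -/
def leg23 (H1 : HilbS) {H2 H3 : HilbS} (x : B (Θ.T H2 H3)) : B (Θ.T (Θ.T H1 H2) H3) :=
  conjOp (Θ.assoc H1 H2 H3).symm (Θ.tmul (1 : B H1) x)

/-- leg `13` of an operator on `H1 ⊗ H3` inside `(H1 ⊗ H2) ⊗ H3`. -/
def leg13 {H1 : HilbS} (H2 : HilbS) {H3 : HilbS} (x : B (Θ.T H1 H3)) :
    B (Θ.T (Θ.T H1 H2) H3) :=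
  conjOp (Θ.assoc H1 H2 H3).symm
    (conjOp (Θ.congrR H1 (Θ.comm H3 H2))
      (conjOp (Θ.assoc H1 H3 H2) (Θ.tmul x (1 : B H2))))

end TensorTheory

/-- A Morita correspondence between von Neumann algebras `A ⊆ B(Ha)`, `B ⊆ B(Hb)`:
a Hilbert space `K` with a faithful unital normal representation `π` of `A`, a faithful
unital normal anti-representation `ρ` of `B`, such that `π(A)' = ρ(B)`. -/
structure MoritaCorr {Ha Hb : HilbS} (As : Set (B Ha)) (Bs : Set (B Hb))
    (K : HilbS) (π : B Ha → B K) (ρ : B Hb → B K) : Prop where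
  π_hom : IsStarHomOn As 1 1 π
  π_normal : NormalOn π As
  π_inj : InjOn π As
  ρ_hom : IsStarAntiHomOn Bs 1 1 ρ
  ρ_normal : NormalOn ρ Bs
  ρ_inj : InjOn ρ Bs
  comm_eq : commutant (π '' As) = ρ '' Bs

/-- W*-Morita equivalence of von Neumann algebras. -/
def MoritaEquiv {Ha Hb : HilbS} (As : Set (B Ha)) (Bs : Set (B Hb)) : Prop :=
  ∃ (K : HilbS) (π : B Ha → B K) (ρ : B Hb → B K), MoritaCorr As Bs K π ρ

/-- A locally compact quantum group (von Neumann algebraic picture), presented by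
`L^∞(𝔾)` in standard position on `L²(𝔾) = Hg`, the dual algebra `L^∞(𝔾̌)`, the right
regular multiplicative unitary `V ∈ L^∞(𝔾̌) ⊗̄ L^∞(𝔾)` (with the pentagon equation),
the left regular unitary `W`, the right multiplicative unitary `V̌` of the dual, and
the anti-automorphism `adJd : x ↦ J̌ x* J̌` of `B(L²(𝔾))` given by the modular
conjugation `J̌` of `L^∞(𝔾̌)`; its restriction to `L^∞(𝔾)` is the unitary antipode. -/
structure LCQG (Θ : TensorTheory) (Hg : HilbS) where
  Gs : Set (B Hg)
  Gds : Set (B Hg)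
  hGs : IsVNA Gs
  hGds : IsVNA Gds
  V : B (Θ.T Hg Hg)
  W : B (Θ.T Hg Hg)
  Vc : B (Θ.T Hg Hg)
  V_unitary : V ∈ unitary (B (Θ.T Hg Hg))
  W_unitary : W ∈ unitary (B (Θ.T Hg Hg))
  Vc_unitary : Vc ∈ unitary (B (Θ.T Hg Hg))
  V_mem : V ∈ Θ.tensorSet Gds Gs
  W_mem : W ∈ Θ.tensorSet Gs (commutant Gds)
  Vc_mem : Vc ∈ Θ.tensorSet (commutant Gs) Gds
  pentagon : Θ.leg12 Hg V * Θ.leg13 Hg V * Θ.leg23 Hg V = Θ.leg23 Hg V * Θ.leg12 Hg V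
  comult_mem : ∀ x ∈ Gs, V * Θ.tmul x 1 * star V ∈ Θ.tensorSet Gs Gs
  comult_W : ∀ x ∈ Gs, V * Θ.tmul x 1 * star V = star W * Θ.tmul 1 x * W
  dual_comult_mem : ∀ y ∈ Gds, Vc * Θ.tmul y 1 * star Vc ∈ Θ.tensorSet Gds Gds
  dual_comult_eq : ∀ y ∈ Gds, Vc * Θ.tmul y 1 * star Vc = star V * Θ.tmul 1 y * V
  adJd : B Hg → B Hg
  adJd_add : ∀ x y, adJd (x + y) = adJd x + adJd y
  adJd_smul : ∀ (c : ℂ) (x), adJd (c • x) = c • adJd x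
  adJd_mul : ∀ x y, adJd (x * y) = adJd y * adJd x
  adJd_star : ∀ x, adJd (star x) = star (adJd x)
  adJd_invol : ∀ x, adJd (adJd x) = x
  adJd_one : adJd 1 = 1
  adJd_normal : NormalOn adJd univ
  adJd_Gs : adJd '' Gs = Gs
  adJd_Gds : adJd '' Gds = commutant Gds

namespace LCQG

variable {Θ : TensorTheory} {Hg : HilbS}

/-- The comultiplication `Δ(x) = V (x ⊗ 1) V*` (as a map on all of `B(L²𝔾)`, whose
restriction to `L^∞(𝔾)` is the coproduct). -/
def coΔ (Q : LCQG Θ Hg) : B Hg → B (Θ.T Hg Hg) := fun x => Q.V * Θ.tmul x 1 * star Q.V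

/-- The dual comultiplication `Δ̌(y) = V̌ (y ⊗ 1) V̌*`. -/
def coΔd (Q : LCQG Θ Hg) : B Hg → B (Θ.T Hg Hg) := fun y => Q.Vc * Θ.tmul y 1 * star Q.Vc

/-- `L^∞(𝔾̂) = L^∞(𝔾̌)'`. -/
def Ghat (Q : LCQG Θ Hg) : Set (B Hg) := commutant Q.Gds

/-- The unitary antipode `R(x) = J̌ x* J̌`. -/
def R (Q : LCQG Θ Hg) : B Hg → B Hg := Q.adJd

end LCQG

/-- A unitary representation of `𝔾` on `K`: a unitary `U ∈ B(K) ⊗̄ L^∞(𝔾)` with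
`(id ⊗ Δ)(U) = U₁₂ U₁₃`. -/
structure IsGRep {Θ : TensorTheory} {Hg : HilbS} (Q : LCQG Θ Hg) (K : HilbS)
    (U : B (Θ.T K Hg)) : Prop where
  unitary_mem : U ∈ unitary (B (Θ.T K Hg))
  rep : Θ.tmap id Q.coΔ U = conjOp (Θ.assoc K Hg Hg) (Θ.tmul U 1 * Θ.leg13 Hg U)

/-- A (right) coaction of `𝔾` on the von Neumann algebra `A ⊆ B(Ha)` having unit `e`
(use `e = 1` for unitally embedded algebras, `e = p` for corners): an injective normal
unital star-homomorphism `α : A → A ⊗̄ L^∞(𝔾)` with `(α ⊗ id) ∘ α = (id ⊗ Δ) ∘ α`. -/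
structure IsCoactionOn {Θ : TensorTheory} {Hg Ha : HilbS} (Q : LCQG Θ Hg)
    (As : Set (B Ha)) (e : B Ha) (α : B Ha → B (Θ.T Ha Hg)) : Prop where
  hom : IsStarHomOn As e (Θ.tmul e 1) α
  normal : NormalOn α As
  inj : InjOn α As
  mapsTo : MapsTo α As (Θ.tensorSet As Q.Gs)
  coassoc : ∀ a ∈ As, conjOp (Θ.assoc Ha Hg Hg) (Θ.tmap α id (α a)) = Θ.tmap id Q.coΔ (α a)

/-- A `𝔾`-W*-algebra. -/
def IsGWAlg {Θ : TensorTheory} {Hg Ha : HilbS} (Q : LCQG Θ Hg)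
    (As : Set (B Ha)) (α : B Ha → B (Θ.T Ha Hg)) : Prop :=
  IsVNA As ∧ (1 : B Ha) ∈ As ∧ IsCoactionOn Q As 1 α

/-- A `𝔾`-Morita correspondence between `(A, α)` and `(B, β)` (Definition 1.2/3.1 of
the paper): a faithful unital normal representation `π` of `A` and anti-representation
`ρ` of `B` on `K` with `π(A)' = ρ(B)`, and a unitary `𝔾`-representation `U` with
`(π ⊗ id)α(a) = U(π(a) ⊗ 1)U*` and `(ρ ⊗ R)β(b) = U*(ρ(b) ⊗ 1)U`. -/
structure GMoritaCorr {Θ : TensorTheory} {Hg Ha Hb : HilbS} (Q : LCQG Θ Hg)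
    (As : Set (B Ha)) (α : B Ha → B (Θ.T Ha Hg))
    (Bs : Set (B Hb)) (β : B Hb → B (Θ.T Hb Hg))
    (K : HilbS) (π : B Ha → B K) (ρ : B Hb → B K) (U : B (Θ.T K Hg)) : Prop where
  π_hom : IsStarHomOn As 1 1 π
  π_normal : NormalOn π As
  π_inj : InjOn π As
  ρ_hom : IsStarAntiHomOn Bs 1 1 ρ
  ρ_normal : NormalOn ρ Bs
  ρ_inj : InjOn ρ Bs
  comm_eq : commutant (π '' As) = ρ '' Bs
  U_rep : IsGRep Q K U
  π_cov : ∀ a ∈ As, Θ.tmap π id (α a) = U * Θ.tmul (π a) 1 * star U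
  ρ_cov : ∀ b ∈ Bs, Θ.tmap ρ Q.R (β b) = star U * Θ.tmul (ρ b) 1 * U

/-- `𝔾`-W*-Morita equivalence `(A, α) ∼_𝔾 (B, β)`. -/
def GMoritaEquiv {Θ : TensorTheory} {Hg Ha Hb : HilbS} (Q : LCQG Θ Hg)
    (As : Set (B Ha)) (α : B Ha → B (Θ.T Ha Hg))
    (Bs : Set (B Hb)) (β : B Hb → B (Θ.T Hb Hg)) : Prop :=
  ∃ (K : HilbS) (π : B Ha → B K) (ρ : B Hb → B K) (U : B (Θ.T K Hg)),
    GMoritaCorr Q As α Bs β K π ρ U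

/-- A `𝔾`-equivariant isomorphism between (possibly non-unitally embedded)
`𝔾`-W*-algebras. -/
structure IsGEquivIso {Θ : TensorTheory} {Hg H1 H2 : HilbS} (Q : LCQG Θ Hg)
    (Ms : Set (B H1)) (e₁ : B H1) (γ : B H1 → B (Θ.T H1 Hg))
    (Ns : Set (B H2)) (e₂ : B H2) (δ : B H2 → B (Θ.T H2 Hg))
    (φ : B H1 → B H2) : Prop where
  hom : IsStarHomOn Ms e₁ e₂ φ
  normal : NormalOn φ Ms
  inj : InjOn φ Ms
  image : φ '' Ms = Ns
  equivariant : ∀ x ∈ Ms, Θ.tmap φ id (γ x) = δ (φ x)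

/-- The trivial coaction `τ(a) = a ⊗ 1`. -/
def trivCoact (Θ : TensorTheory) (Hg Ha : HilbS) : B Ha → B (Θ.T Ha Hg) :=
  fun a => Θ.tmul a 1

/-- Fixed points of a coaction. -/
def fixedPts (Θ : TensorTheory) {Hg Ha : HilbS} (As : Set (B Ha))
    (α : B Ha → B (Θ.T Ha Hg)) : Set (B Ha) :=
  {x ∈ As | α x = Θ.tmul x 1}

/-- An inner action: implemented by a unitary `𝔾`-representation `U ∈ A ⊗̄ L^∞(𝔾)`. -/
def IsInnerAction {Θ : TensorTheory} {Hg Ha : HilbS} (Q : LCQG Θ Hg)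
    (As : Set (B Ha)) (α : B Ha → B (Θ.T Ha Hg)) : Prop :=
  ∃ U : B (Θ.T Ha Hg), U ∈ Θ.tensorSet As Q.Gs ∧ IsGRep Q Ha U ∧
    ∀ a ∈ As, α a = U * Θ.tmul a 1 * star U

/-- A locally compact quantum group together with its (right) dual, realized on the
same `L²`-space with the standard compatibilities. -/
structure LCQGPair (Θ : TensorTheory) (Hg : HilbS) where
  Q : LCQG Θ Hg
  Qd : LCQG Θ Hg
  dual_alg : Qd.Gs = Q.Gds
  dual_V : Qd.V = Q.Vc
  dual_comm : Qd.Gds = commutant Q.Gs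

/-- The crossed product `A ⋊_α 𝔾 = [α(A)(1 ⊗ L^∞(𝔾̌))]''` (as σ-weakly closed span). -/
def crossedSet {Θ : TensorTheory} {Hg : HilbS} (Q : LCQG Θ Hg) {Ha : HilbS}
    (As : Set (B Ha)) (α : B Ha → B (Θ.T Ha Hg)) : Set (B (Θ.T Ha Hg)) :=
  spanClosure {z | ∃ a ∈ As, ∃ y ∈ Q.Gds, z = α a * Θ.tmul (1 : B Ha) y}

/-- The extension `id ⊗ Δ_r` (equivalently, of `id ⊗ Δ`) to operators on `Ha ⊗ L²(𝔾)`: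
`z ↦ V₂₃ z₁₂ V₂₃*`.  Restricted to `A ⊗̄ L^∞(𝔾)` this is `id ⊗ Δ`, restricted to
`A ⋊_α 𝔾` this is the adjoint `𝔾`-action `id ⊗ Δ_r`. -/
def coactV {Θ : TensorTheory} {Hg : HilbS} (Q : LCQG Θ Hg) {Ha : HilbS} :
    B (Θ.T Ha Hg) → B (Θ.T (Θ.T Ha Hg) Hg) :=
  fun z => Θ.leg23 Ha Q.V * Θ.tmul z 1 * star (Θ.leg23 Ha Q.V)

/-- The dual action `id ⊗ Δ̌_r` on operators on `Ha ⊗ L²(𝔾)`: `z ↦ V̌₂₃ z₁₂ V̌₂₃*`. -/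
def coactVc {Θ : TensorTheory} {Hg : HilbS} (Q : LCQG Θ Hg) {Ha : HilbS} :
    B (Θ.T Ha Hg) → B (Θ.T (Θ.T Ha Hg) Hg) :=
  fun z => Θ.leg23 Ha Q.Vc * Θ.tmul z 1 * star (Θ.leg23 Ha Q.Vc)

/-- A unital completely positive map defined on `M ⊆ B(H)` (with unit `e ↦ e'`). -/
structure IsUCPOn {H K : HilbS} (M : Set (B H)) (e : B H) (e' : B K)
    (f : B H → B K) : Prop where
  map_add : ∀ x ∈ M, ∀ y ∈ M, f (x + y) = f x + f y
  map_smul : ∀ (c : ℂ), ∀ x ∈ M, f (c • x) = c • f x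
  map_unit : f e = e'
  cp : ∀ (n : ℕ) (x : Fin n → B H), (∀ i, x i ∈ M) → ∀ ξ : Fin n → K.carrier,
    0 ≤ ∑ i, ∑ j, ⟪ξ i, (f (star (x i) * x j)) (ξ j)⟫

/-- Injectivity of a von Neumann algebra: a ucp conditional expectation `B(H) → A`. -/
def VNInjective {H : HilbS} (M : Set (B H)) : Prop :=
  ∃ E : B H → B H, IsUCPOn (univ : Set (B H)) 1 1 E ∧ MapsTo E univ M ∧ ∀ x ∈ M, E x = x

/-- `𝔾`-amenability of `(A, α)`: a `𝔾`-equivariant ucp conditional expectation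
`A ⊗̄ L^∞(𝔾) → α(A)`. -/
def GAmenable {Θ : TensorTheory} {Hg Ha : HilbS} (Q : LCQG Θ Hg)
    (As : Set (B Ha)) (α : B Ha → B (Θ.T Ha Hg)) : Prop :=
  ∃ E : B (Θ.T Ha Hg) → B (Θ.T Ha Hg),
    IsUCPOn (Θ.tensorSet As Q.Gs) 1 1 E ∧
    MapsTo E (Θ.tensorSet As Q.Gs) (α '' As) ∧
    (∀ a ∈ As, E (α a) = α a) ∧
    ∀ z ∈ Θ.tensorSet As Q.Gs, Θ.tmap E id (coactV Q z) = coactV Q (E z)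

/-- Inner `𝔾`-amenability of `(A, α)`: a `𝔾`-equivariant ucp conditional expectation
`A ⋊_α 𝔾 → α(A)` for the adjoint action. -/
def InnerGAmenable {Θ : TensorTheory} {Hg Ha : HilbS} (Q : LCQG Θ Hg)
    (As : Set (B Ha)) (α : B Ha → B (Θ.T Ha Hg)) : Prop :=
  ∃ E : B (Θ.T Ha Hg) → B (Θ.T Ha Hg),
    IsUCPOn (crossedSet Q As α) 1 1 E ∧
    MapsTo E (crossedSet Q As α) (α '' As) ∧
    (∀ a ∈ As, E (α a) = α a) ∧
    ∀ z ∈ crossedSet Q As α, Θ.tmap E id (coactV Q z) = coactV Q (E z)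

/-- `𝔾`-injectivity (by the characterization `𝔾`-injective ⟺ injective + `𝔾`-amenable,
[DR24a, Proposition 3.10]). -/
def GInjective {Θ : TensorTheory} {Hg Ha : HilbS} (Q : LCQG Θ Hg)
    (As : Set (B Ha)) (α : B Ha → B (Θ.T Ha Hg)) : Prop :=
  VNInjective As ∧ GAmenable Q As α

/-- Relative amenability of `N ⊆ M` (both `𝔾`-invariant subalgebras of `B(L²𝔾)` for a
coproduct-type action): a `𝔾`-equivariant ucp map `M → N`. -/
def RelativelyAmenable {Θ : TensorTheory} {Hg : HilbS} (Q : LCQG Θ Hg)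
    (Ms Ns : Set (B Hg)) : Prop :=
  ∃ E : B Hg → B Hg, IsUCPOn Ms 1 1 E ∧ MapsTo E Ms Ns ∧
    ∀ y ∈ Ms, Θ.tmap E id (Q.coΔ y) = Q.coΔ (E y)

/-- A standard form of a `𝔾`-W*-algebra `(M, μ)`, with the unitary implementation of
the action: a faithful unital normal representation `π` on `L`, the conjugation map
`adJ : x ↦ J x* J` with `J π(M) J = π(M)'` and `J c J = c*` for central `c`, and
a unitary `𝔾`-representation `U` implementing `μ`. -/
structure StdFormG {Θ : TensorTheory} {Hg Ha : HilbS} (Q : LCQG Θ Hg)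
    (Ms : Set (B Ha)) (μ : B Ha → B (Θ.T Ha Hg)) where
  L : HilbS
  π : B Ha → B L
  hom : IsStarHomOn Ms 1 1 π
  normal : NormalOn π Ms
  inj : InjOn π Ms
  adJ : B L → B L
  adJ_add : ∀ x y, adJ (x + y) = adJ x + adJ y
  adJ_smul : ∀ (c : ℂ) (x), adJ (c • x) = c • adJ x
  adJ_mul : ∀ x y, adJ (x * y) = adJ y * adJ x
  adJ_star : ∀ x, adJ (star x) = star (adJ x)
  adJ_invol : ∀ x, adJ (adJ x) = x
  adJ_one : adJ 1 = 1
  adJ_normal : NormalOn adJ univ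
  adJ_image : adJ '' (π '' Ms) = commutant (π '' Ms)
  adJ_central : ∀ x ∈ (π '' Ms) ∩ commutant (π '' Ms), adJ x = star x
  U : B (Θ.T L Hg)
  U_rep : IsGRep Q L U
  impl : ∀ a ∈ Ms, Θ.tmap π id (μ a) = U * Θ.tmul (π a) 1 * star U

/-- Matrix coefficients of a (raw) `𝔾`-`A`-`A`-correspondence `(K, π, ρ, U)`. -/
def corrCoeff (Θ : TensorTheory) {Hg Ha : HilbS} {K : HilbS}
    (π ρ : B Ha → B K) (U : B (Θ.T K Hg)) (ξ ξ' : K.carrier)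
    (a b : B Ha) (η η' : Hg.carrier) : ℂ :=
  ⟪Θ.tvec ξ η, ((Θ.tmul (π a) 1 * U * Θ.tmul (ρ b) 1 : B (Θ.T K Hg))) (Θ.tvec ξ' η')⟫

/-- `𝔾`-equivariant weak containment of `𝔾`-`A`-`A`-correspondences, formulated by
approximation of all (equivariant) matrix coefficients. -/
def wkContained (Θ : TensorTheory) {Hg Ha : HilbS} (As : Set (B Ha))
    (K₁ : HilbS) (π₁ ρ₁ : B Ha → B K₁) (U₁ : B (Θ.T K₁ Hg))
    (K₂ : HilbS) (π₂ ρ₂ : B Ha → B K₂) (U₂ : B (Θ.T K₂ Hg)) : Prop :=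
  ∀ (ξ : K₁.carrier) (F : Finset (B Ha × B Ha × Hg.carrier × Hg.carrier)) (ε : ℝ),
    0 < ε → (∀ q ∈ F, q.1 ∈ As ∧ q.2.1 ∈ As) →
    ∃ (n : ℕ) (η : Fin n → K₂.carrier), ∀ q ∈ F,
      ‖corrCoeff Θ π₁ ρ₁ U₁ ξ ξ q.1 q.2.1 q.2.2.1 q.2.2.2 -
        ∑ i, corrCoeff Θ π₂ ρ₂ U₂ (η i) (η i) q.1 q.2.1 q.2.2.1 q.2.2.2‖ < ε

/-- Strong `𝔾`-amenability of `(A, α)`: the trivial `𝔾`-`A`-`A`-correspondence `L²(A)`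
is `𝔾`-weakly contained in `L²(A ⊗̄ L^∞(𝔾))` (for any realizations of the standard
forms with their unitary implementations). -/
def StronglyGAmenable {Θ : TensorTheory} {Hg Ha : HilbS} (Q : LCQG Θ Hg)
    (As : Set (B Ha)) (α : B Ha → B (Θ.T Ha Hg)) : Prop :=
  ∀ (sfA : StdFormG Q As α) (sfT : StdFormG Q (Θ.tensorSet As Q.Gs) (coactV Q)),
    wkContained Θ As sfA.L sfA.π (fun a => sfA.adJ (sfA.π a)) sfA.U
      sfT.L (fun a => sfT.π (α a)) (fun a => sfT.adJ (sfT.π (α a))) sfT.U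

/-- Strong inner `𝔾`-amenability of `(A, α)`: the trivial `𝔾`-`A`-`A`-correspondence is
`𝔾`-weakly contained in `L²(A ⋊_α 𝔾)` with the adjoint action. -/
def StronglyInnerGAmenable {Θ : TensorTheory} {Hg Ha : HilbS} (Q : LCQG Θ Hg)
    (As : Set (B Ha)) (α : B Ha → B (Θ.T Ha Hg)) : Prop :=
  ∀ (sfA : StdFormG Q As α) (sfT : StdFormG Q (crossedSet Q As α) (coactV Q)),
    wkContained Θ As sfA.L sfA.π (fun a => sfA.adJ (sfA.π a)) sfA.U
      sfT.L (fun a => sfT.π (α a)) (fun a => sfT.adJ (sfT.π (α a))) sfT.U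

/-- A Vaes-closed quantum subgroup `ℍ` of `𝔾`, given by a faithful unital normal
*-homomorphism `γ̌ : L^∞(ℍ̌) → L^∞(𝔾̌)` intertwining the dual coproducts. -/
structure ClosedQSubgroup (Θ : TensorTheory) {Hg Hh : HilbS}
    (G : LCQG Θ Hg) (Hq : LCQG Θ Hh) where
  γd : B Hh → B Hg
  hom : IsStarHomOn Hq.Gds 1 1 γd
  normal : NormalOn γd Hq.Gds
  inj : InjOn γd Hq.Gds
  mapsTo : MapsTo γd Hq.Gds G.Gds
  intertwine : ∀ y ∈ Hq.Gds, Θ.tmap γd γd (Hq.coΔd y) = G.coΔd (γd y)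

namespace ClosedQSubgroup

variable {Θ : TensorTheory} {Hg Hh : HilbS} {G : LCQG Θ Hg} {Hq : LCQG Θ Hh}

/-- `V_{𝔾,ℍ} = (γ̌ ⊗ id)(V_ℍ)`. -/
def VGH (c : ClosedQSubgroup Θ G Hq) : B (Θ.T Hg Hh) := Θ.tmap c.γd id Hq.V

/-- The coaction `Δ^{𝔾,ℍ} : L^∞(𝔾) → L^∞(𝔾) ⊗̄ L^∞(ℍ)`. -/
def ΔGH (c : ClosedQSubgroup Θ G Hq) : B Hg → B (Θ.T Hg Hh) :=
  fun x => c.VGH * Θ.tmul x 1 * star c.VGH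

/-- `γ̂ = Ad(J̌_𝔾) ∘ γ̌ ∘ Ad(J̌_ℍ) : L^∞(ℍ̂) → L^∞(𝔾̂)`. -/
def γhat (c : ClosedQSubgroup Θ G Hq) : B Hh → B Hg :=
  fun y => G.adJd (c.γd (Hq.adJd y))

/-- `W_{ℍ,𝔾} = (id ⊗ γ̂)(W_ℍ)`. -/
def WHG (c : ClosedQSubgroup Θ G Hq) : B (Θ.T Hh Hg) := Θ.tmap id c.γhat Hq.W

/-- The coaction `Δ^{ℍ,𝔾} : L^∞(𝔾) → L^∞(ℍ) ⊗̄ L^∞(𝔾)`. -/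
def ΔHG (c : ClosedQSubgroup Θ G Hq) : B Hg → B (Θ.T Hh Hg) :=
  fun x => star c.WHG * Θ.tmul 1 x * c.WHG

/-- The cotensor product (induction) `A □_ℍ L^∞(𝔾)`. -/
def cotensor (c : ClosedQSubgroup Θ G Hq) {Ha : HilbS} (As : Set (B Ha))
    (αH : B Ha → B (Θ.T Ha Hh)) : Set (B (Θ.T Ha Hg)) :=
  {z ∈ Θ.tensorSet As G.Gs |
    Θ.tmap αH id z = conjOp (Θ.assoc Ha Hh Hg).symm (Θ.tmap id c.ΔHG z)}

/-- The canonical dual `𝔾̌`-action `δ = (id ⊗ id ⊗ γ̌) ∘ (id ⊗ Δ̌_r^ℍ)` on `A ⋊_α ℍ`. -/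
def dualCrossedAct (c : ClosedQSubgroup Θ G Hq) {Ha : HilbS} :
    B (Θ.T Ha Hh) → B (Θ.T (Θ.T Ha Hh) Hg) :=
  fun z => Θ.tmap id c.γd (coactVc Hq z)

end ClosedQSubgroup

/-- The dual coideal `L^∞(𝕂̌) = J̌ (L^∞(𝕂\𝔾)' ∩ L^∞(𝔾̂)) J̌ ⊆ L^∞(𝔾̌)`. -/
def dualCoideal {Θ : TensorTheory} {Hg : HilbS} (Q : LCQG Θ Hg)
    (Kset : Set (B Hg)) : Set (B Hg) :=
  Q.adJd '' (commutant Kset ∩ Q.Ghat)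

/-- The vector functional `ω_{ξ,η} = ⟪ξ, · η⟫`. -/
def vecFun {H : HilbS} (ξ η : H.carrier) : B H → ℂ := fun T => ⟪ξ, T η⟫

/-- The C*-algebra of regular elements of a `𝔾`-W*-algebra (`𝔾` compact): the norm
closed span of the elements `(id ⊗ ω)α(a)`, `ω` normal. -/
def regulars (Θ : TensorTheory) {Hg Ha : HilbS} (As : Set (B Ha))
    (α : B Ha → B (Θ.T Ha Hg)) : Set (B Ha) :=
  closure ((Submodule.span ℂ
    {z | ∃ a ∈ As, ∃ ξ η : Hg.carrier, z = Θ.sliceR (vecFun ξ η) (α a)} :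
      Submodule ℂ (B Ha)) : Set (B Ha))

/-- Compactness of `𝔾`: a (normal, faithful, bi-invariant) Haar state. -/
structure IsCompactData {Θ : TensorTheory} {Hg : HilbS} (Q : LCQG Θ Hg) where
  haar : B Hg → ℂ
  haar_add : ∀ x y, haar (x + y) = haar x + haar y
  haar_smul : ∀ (c : ℂ) (x), haar (c • x) = c * haar x
  haar_pos : ∀ x ∈ Q.Gs, 0 ≤ haar (star x * x)
  haar_one : haar 1 = 1
  haar_normal : NormalFunOn haar Q.Gs
  haar_faithful : ∀ x ∈ Q.Gs, haar (star x * x) = 0 → x = 0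
  left_inv : ∀ x ∈ Q.Gs, Θ.sliceL haar (Q.coΔ x) = haar x • 1
  right_inv : ∀ x ∈ Q.Gs, Θ.sliceR haar (Q.coΔ x) = haar x • 1

/-- `𝕂` is a compact quasi-subgroup of `𝔾`: the coideal `L^∞(𝕂\𝔾)` arises as the fixed
points of the conditional expectation `(id ⊗ ω)Δ` of an idempotent state `ω`. -/
def IsCompactQuasiSubgroup (Θ : TensorTheory) {Hg : HilbS} (Q : LCQG Θ Hg)
    (Kset : Set (B Hg)) : Prop :=
  ∃ ω : B Hg → ℂ,
    (∀ x y, ω (x + y) = ω x + ω y) ∧ (∀ (c : ℂ) (x), ω (c • x) = c * ω x) ∧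
    (∀ x ∈ Q.Gs, 0 ≤ ω (star x * x)) ∧ ω 1 = 1 ∧
    (∀ x ∈ Q.Gs, ω (Θ.sliceR ω (Q.coΔ x)) = ω x) ∧
    Kset = {x ∈ Q.Gs | Θ.sliceR ω (Q.coΔ x) = x}

end Paper

namespace Paper

open Set
open scoped ComplexOrder

/-- A right pre-Hilbert `B`-module over the von Neumann algebra `B ⊆ B(Hb)`: a
`B`-module with a `B`-valued inner product, not assumed complete. -/
structure PreHilbMod {Hb : HilbS} (Bs : Set (B Hb)) where
  X : Type
  [addX : AddCommGroup X]
  [modX : Module ℂ X]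
  act : X → B Hb → X
  ip : X → X → B Hb
  act_one : ∀ x, act x 1 = x
  act_mul : ∀ x, ∀ b ∈ Bs, ∀ b' ∈ Bs, act x (b * b') = act (act x b) b'
  act_add : ∀ x y, ∀ b ∈ Bs, act (x + y) b = act x b + act y b
  act_add' : ∀ x, ∀ b ∈ Bs, ∀ b' ∈ Bs, act x (b + b') = act x b + act x b'
  act_smul : ∀ (c : ℂ) (x), ∀ b ∈ Bs, act (c • x) b = c • act x b
  act_smul' : ∀ (c : ℂ) (x), ∀ b ∈ Bs, act x (c • b) = c • act x b
  ip_mem : ∀ x y, ip x y ∈ Bs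
  ip_add_right : ∀ x y z, ip x (y + z) = ip x y + ip x z
  ip_smul_right : ∀ (c : ℂ) (x y), ip x (c • y) = c • ip x y
  ip_star : ∀ x y, star (ip x y) = ip y x
  ip_act : ∀ x y, ∀ b ∈ Bs, ip x (act y b) = ip x y * b
  ip_pos : ∀ x, (ip x x).IsPositive
  ip_defin : ∀ x, ip x x = 0 → x = 0

attribute [instance] PreHilbMod.addX PreHilbMod.modX

/-- The norm of an element of a pre-Hilbert module. -/
def PreHilbMod.modNorm {Hb : HilbS} {Bs : Set (B Hb)} (Xm : PreHilbMod Bs)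
    (x : Xm.X) : ℝ :=
  Real.sqrt ‖Xm.ip x x‖

/-- The operator norm of a map between pre-Hilbert modules. -/
def mapNorm {Hb1 Hb2 : HilbS} {B1s : Set (B Hb1)} {B2s : Set (B Hb2)}
    (X1 : PreHilbMod B1s) (X2 : PreHilbMod B2s) (f : X1.X → X2.X) : ℝ :=
  sInf {C : ℝ | 0 ≤ C ∧ ∀ x, X2.modNorm (f x) ≤ C * X1.modNorm x}

/-- Self-duality of a pre-Hilbert `B`-module: every bounded `B`-linear map into `B` is
given by the inner product against an element. -/
def IsSelfDual {Hb : HilbS} {Bs : Set (B Hb)} (Y : PreHilbMod Bs) : Prop :=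
  ∀ f : Y.X → B Hb,
    (∀ x y, f (x + y) = f x + f y) → (∀ (c : ℂ) (x), f (c • x) = c • f x) →
    (∀ x, ∀ b ∈ Bs, f (Y.act x b) = f x * b) → (∀ x, f x ∈ Bs) →
    (∃ C : ℝ, ∀ x, ‖f x‖ ≤ C * Y.modNorm x) →
    ∃ y₀, ∀ x, f x = Y.ip y₀ x

/-- Paschke's self-dual completion of a pre-Hilbert `B`-module `Xm`: a self-dual
pre-Hilbert `B`-module containing `Xm` isometrically, compatibly with the module
structures, with `Xm` separating points. -/
structure SelfDualCompletion {Hb : HilbS} {Bs : Set (B Hb)} (Xm : PreHilbMod Bs) where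
  Y : PreHilbMod Bs
  ι : Xm.X → Y.X
  ι_add : ∀ x y, ι (x + y) = ι x + ι y
  ι_smul : ∀ (c : ℂ) (x), ι (c • x) = c • ι x
  ι_act : ∀ x, ∀ b ∈ Bs, ι (Xm.act x b) = Y.act (ι x) b
  ι_ip : ∀ x y, Y.ip (ι x) (ι y) = Xm.ip x y
  selfDual : IsSelfDual Y
  separating : ∀ y, (∀ x, Y.ip (ι x) y = 0) → y = 0

theorem vna_mem_iff {H : HilbS} {M : Set (B H)} (hM : IsVNA M) (x : B H) :
    x ∈ M ↔ ∀ c ∈ commutant M, c * x = x * c := by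
  conv_lhs => rw [← hM.2]
  exact Set.mem_centralizer_iff

theorem vna_comm {H : HilbS} {M : Set (B H)} {x c : B H} (hx : x ∈ M)
    (hc : c ∈ commutant M) : x * c = c * x :=
  Set.mem_centralizer_iff.1 hc x hx

theorem vna_add {H : HilbS} {M : Set (B H)} (hM : IsVNA M) {x y : B H}
    (hx : x ∈ M) (hy : y ∈ M) : x + y ∈ M := by
  rw [vna_mem_iff hM] at *
  intro c hc
  rw [mul_add, add_mul, hx c hc, hy c hc]

theorem vna_mul {H : HilbS} {M : Set (B H)} (hM : IsVNA M) {x y : B H}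
    (hx : x ∈ M) (hy : y ∈ M) : x * y ∈ M := by
  rw [vna_mem_iff hM] at *
  intro c hc
  rw [← mul_assoc, hx c hc, mul_assoc, hy c hc, mul_assoc]

theorem vna_smul {H : HilbS} {M : Set (B H)} (hM : IsVNA M) (z : ℂ) {x : B H}
    (hx : x ∈ M) : z • x ∈ M := by
  rw [vna_mem_iff hM] at *
  intro c hc
  rw [mul_smul_comm, hx c hc, smul_mul_assoc]

theorem vna_one {H : HilbS} {M : Set (B H)} (hM : IsVNA M) : (1 : B H) ∈ M := by
  rw [vna_mem_iff hM]
  intro c hc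
  simp

theorem vna_zero {H : HilbS} {M : Set (B H)} (hM : IsVNA M) : (0 : B H) ∈ M := by
  rw [vna_mem_iff hM]
  intro c hc
  simp

theorem comm_star {H : HilbS} {M : Set (B H)} (hM : IsVNA M) {c : B H}
    (hc : c ∈ commutant M) : star c ∈ commutant M := by
  refine Set.mem_centralizer_iff.2 fun m hm => ?_
  have := vna_comm (hM.1 m hm) hc
  have h2 := congrArg star this
  simpa using h2.symm

theorem inner_star_left {H : HilbS} (a : B H) (x y : H.carrier) :
    ⟪star a x, y⟫ = ⟪x, a y⟫ := by
  rw [ContinuousLinearMap.star_eq_adjoint, ContinuousLinearMap.adjoint_inner_left]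

/-- The closed submodule generated by a vector. -/
def cyc {H : HilbS} {M : Set (B H)} (hM : IsVNA M) (ζ : H.carrier) :
    Submodule ℂ H.carrier where
  carrier := (fun b : B H => b ζ) '' M
  add_mem' := by
    rintro _ _ ⟨a, ha, rfl⟩ ⟨b, hb, rfl⟩
    exact ⟨a + b, vna_add hM ha hb, rfl⟩
  zero_mem' := ⟨0, vna_zero hM, rfl⟩
  smul_mem' := by
    rintro z _ ⟨a, ha, rfl⟩
    exact ⟨z • a, vna_smul hM z ha, rfl⟩

/-- Projection onto the cyclic subspace lies in the commutant. -/
theorem exists_cyc_proj {H : HilbS} {M : Set (B H)} (hM : IsVNA M) (ζ : H.carrier) :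
    ∃ p ∈ commutant M, star p = p ∧ p * p = p ∧ p ζ = ζ ∧
      ∀ ξ, p ξ ∈ closure ((fun b : B H => b ζ) '' M) := by
  let U : Submodule ℂ H.carrier := (cyc hM ζ).topologicalClosure
  have hUc : IsClosed (U : Set H.carrier) := (cyc hM ζ).isClosed_topologicalClosure
  have : CompleteSpace U := hUc.completeSpace_coe
  have hinv : ∀ a ∈ M, ∀ v ∈ U, a v ∈ U := by
    intro a ha v hv
    have hv' : v ∈ closure ((fun b : B H => b ζ) '' M) := hv
    change a v ∈ closure ((fun b : B H => b ζ) '' M)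
    refine map_mem_closure a.continuous hv' ?_
    rintro _ ⟨b, hb, rfl⟩
    exact ⟨a * b, vna_mul hM ha hb, rfl⟩
  have hinv' : ∀ a ∈ M, ∀ v ∈ Uᗮ, a v ∈ Uᗮ := by
    intro a ha v hv
    rw [Submodule.mem_orthogonal] at hv ⊢
    intro u hu
    rw [← inner_star_left]
    exact hv _ (hinv _ (hM.1 a ha) u hu)
  refine ⟨U.starProjection, ?_, ?_, ?_, ?_, ?_⟩
  · refine Set.mem_centralizer_iff.2 fun a ha => ?_
    ext ξ
    change a (U.starProjection ξ) = U.starProjection (a ξ)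
    refine (Submodule.eq_starProjection_of_mem_orthogonal
      (hinv a ha _ (U.starProjection_apply_mem ξ)) ?_).symm
    rw [← map_sub]
    exact hinv' a ha _ (Submodule.sub_starProjection_mem_orthogonal ξ)
  · refine ContinuousLinearMap.ext fun x => ext_inner_right ℂ fun y => ?_
    rw [inner_star_left, Submodule.inner_starProjection_left_eq_right]
  · exact Submodule.isIdempotentElem_starProjection U
  · rw [Submodule.starProjection_eq_self_iff]
    exact subset_closure ⟨1, vna_one hM, rfl⟩
  · intro ξ
    exact U.starProjection_apply_mem ξ

/-- The quadratic form attached to an operator matrix. -/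
def qf {H : HilbS} {I : Type} (a : I → I → B H) (s : Finset I) (ξ : I → H.carrier) : ℝ :=
  (∑ i ∈ s, ∑ j ∈ s, ⟪ξ i, a i j (ξ j)⟫).re

theorem qf_split {H : HilbS} {M : Set (B H)} {I : Type} (a : I → I → B H)
    (ha : ∀ i j, a i j ∈ M) (s : Finset I) (ξ : I → H.carrier) (p : B H)
    (hp : p ∈ commutant M) (hps : star p = p) (hpp : p * p = p) :
    qf a s ξ = qf a s (fun i => p (ξ i)) + qf a s (fun i => ξ i - p (ξ i)) := by
  unfold qf
  rw [← Complex.add_re, ← Finset.sum_add_distrib]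
  simp_rw [← Finset.sum_add_distrib]
  congr 1
  refine Finset.sum_congr rfl fun i _ => Finset.sum_congr rfl fun j _ => ?_
  have hc : ∀ v, a i j (p v) = p (a i j v) := fun v =>
    congrArg (fun T : B H => T v) (vna_comm (ha i j) hp)
  have h1 : ∀ u v, ⟪p u, v⟫ = ⟪u, p v⟫ := fun u v => by
    conv_lhs => rw [← hps]
    rw [inner_star_left]
  have h2 : ∀ v, p (p v) = p v := fun v => congrArg (fun T : B H => T v) hpp
  simp only [map_sub, inner_sub_left, inner_sub_right, hc, h1, h2]
  ring

theorem qf_nonneg {H : HilbS} {M : Set (B H)} (hM : IsVNA M) {I : Type} (a : I → I → B H)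
    (ha : ∀ i j, a i j ∈ M) (s : Finset I)
    (hpos : ∀ (ζ : H.carrier) (b : I → B H), (∀ i, b i ∈ M) → 0 ≤ qf a s (fun i => b i ζ))
    (ξ : I → H.carrier) : 0 ≤ qf a s ξ := by
  classical
  have hcont : Continuous (fun ξ : I → H.carrier => qf a s ξ) := by
    unfold qf
    fun_prop
  have hcyc : ∀ ζ (η : I → H.carrier), (∀ i, η i ∈ closure ((fun b : B H => b ζ) '' M)) →
      0 ≤ qf a s η := by
    intro ζ η hη
    have hcl : IsClosed {ξ : I → H.carrier | 0 ≤ qf a s ξ} := isClosed_le continuous_const hcont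
    have hsub : Set.pi univ (fun _ : I => (fun b : B H => b ζ) '' M) ⊆
        {ξ : I → H.carrier | 0 ≤ qf a s ξ} := by
      intro ξ hξ
      choose b hb hbe using fun i => hξ i (mem_univ i)
      have : ξ = fun i => b i ζ := funext fun i => (hbe i).symm
      rw [this]
      exact hpos ζ b hb
    have := closure_minimal hsub hcl
    rw [closure_pi_set] at this
    exact this fun i _ => hη i
  suffices h : ∀ n : ℕ, ∀ ξ : I → H.carrier, (s.filter fun i => ξ i ≠ 0).card = n →
      0 ≤ qf a s ξ from h _ ξ rfl
  intro n
  induction n using Nat.strong_induction_on with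
  | _ n ih =>
    intro ξ hn
    by_cases h0 : ∃ i ∈ s, ξ i ≠ 0
    · obtain ⟨i0, hi0, hne⟩ := h0
      obtain ⟨p, hp, hps, hpp, hpζ, hcl⟩ := exists_cyc_proj hM (ξ i0)
      rw [qf_split a ha s ξ p hp hps hpp]
      refine add_nonneg (hcyc (ξ i0) _ fun i => hcl _) ?_
      refine ih _ ?_ _ rfl
      rw [← hn]
      refine Finset.card_lt_card ?_
      rw [Finset.ssubset_iff_of_subset]
      · refine ⟨i0, by simp [hi0, hne], by simp [hpζ]⟩
      · intro i hi
        rw [Finset.mem_filter] at hi ⊢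
        refine ⟨hi.1, fun h => hi.2 ?_⟩
        simp [h]
    · push Not at h0
      have : qf a s ξ = 0 := by
        unfold qf
        rw [Finset.sum_eq_zero, Complex.zero_re]
        intro i hi
        refine Finset.sum_eq_zero fun j hj => ?_
        rw [h0 i hi, inner_zero_left]
      rw [this]

section modlemmas

variable {H : HilbS} {M : Set (B H)} (X : PreHilbMod M)

theorem ip_add_left (x y z : X.X) : X.ip (x + y) z = X.ip x z + X.ip y z := by
  rw [← X.ip_star, X.ip_add_right, star_add, X.ip_star, X.ip_star]

theorem ip_smul_left (c : ℂ) (x y : X.X) : X.ip (c • x) y = (starRingEnd ℂ c) • X.ip x y := by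
  rw [← X.ip_star, X.ip_smul_right, star_smul, X.ip_star]
  rfl

theorem ip_act_left (x y : X.X) (b : B H) (hb : b ∈ M) :
    X.ip (X.act x b) y = star b * X.ip x y := by
  rw [← X.ip_star, X.ip_act _ _ _ hb, star_mul, X.ip_star]

theorem ip_sum_right {I : Type} (s : Finset I) (x : X.X) (f : I → X.X) :
    X.ip x (∑ i ∈ s, f i) = ∑ i ∈ s, X.ip x (f i) :=
  map_sum (AddMonoidHom.mk' (X.ip x) (X.ip_add_right x)) f s

theorem ip_sum_left {I : Type} (s : Finset I) (x : X.X) (f : I → X.X) :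
    X.ip (∑ i ∈ s, f i) x = ∑ i ∈ s, X.ip (f i) x :=
  map_sum (AddMonoidHom.mk' (fun y => X.ip y x) (fun y z => ip_add_left X y z x)) f s

theorem ip_sub_right (x y z : X.X) : X.ip x (y - z) = X.ip x y - X.ip x z :=
  map_sub (AddMonoidHom.mk' (X.ip x) (X.ip_add_right x)) y z

theorem ip_sub_left (x y z : X.X) : X.ip (x - y) z = X.ip x z - X.ip y z := by
  rw [← X.ip_star, ip_sub_right, star_sub, X.ip_star, X.ip_star]

theorem ip_ext_right {y z : X.X} (h : ∀ x, X.ip x y = X.ip x z) : y = z := by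
  refine sub_eq_zero.1 (X.ip_defin _ ?_)
  rw [ip_sub_right, h, sub_self]

theorem ip_ext_left {y z : X.X} (h : ∀ x, X.ip y x = X.ip z x) : y = z := by
  refine ip_ext_right X fun x => ?_
  rw [← X.ip_star, h, X.ip_star]

theorem modNorm_nonneg (x : X.X) : 0 ≤ X.modNorm x := Real.sqrt_nonneg _

theorem modNorm_sq (x : X.X) : X.modNorm x ^ 2 = ‖X.ip x x‖ := Real.sq_sqrt (norm_nonneg _)

theorem ip_comb (s : Finset X.X) (b : X.X → B H) (hb : ∀ i, b i ∈ M) (ζ : H.carrier) :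
    ⟪ζ, X.ip (∑ i ∈ s, X.act i (b i)) (∑ i ∈ s, X.act i (b i)) ζ⟫ =
      ∑ i ∈ s, ∑ j ∈ s, ⟪b i ζ, X.ip i j (b j ζ)⟫ := by
  rw [ip_sum_left]
  simp_rw [ip_sum_right, X.ip_act _ _ _ (hb _), ip_act_left X _ _ _ (hb _)]
  simp only [sum_apply, inner_sum]
  refine Finset.sum_congr rfl fun i _ => Finset.sum_congr rfl fun j _ => ?_
  change ⟪ζ, star (b i) (X.ip i j (b j ζ))⟫ = _
  rw [← inner_star_left, star_star]

theorem ip_qf_nonneg (hM : IsVNA M) (s : Finset X.X) (ξ : X.X → H.carrier) :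
    0 ≤ qf X.ip s ξ := by
  refine qf_nonneg hM X.ip X.ip_mem s (fun ζ b hb => ?_) ξ
  unfold qf
  rw [← ip_comb X s b hb]
  exact (X.ip_pos _).re_inner_nonneg_right ζ

/-- Pre-inner product on finitely supported functions. -/
def gnsCore (hM : IsVNA M) : PreInnerProductSpace.Core ℂ (X.X →₀ H.carrier) where
  inner u v := u.sum fun x ξ => v.sum fun y η => ⟪ξ, X.ip x y η⟫
  conj_inner_symm u v := by
    simp only [Finsupp.sum, map_sum, inner_conj_symm]
    rw [Finset.sum_comm]
    refine Finset.sum_congr rfl fun i _ => Finset.sum_congr rfl fun j _ => ?_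
    rw [← inner_star_left, X.ip_star]
  re_inner_nonneg u := ip_qf_nonneg X hM u.support u
  add_left u v w := by
    rw [Finsupp.sum_add_index']
    · intro x
      simp
    · intro x ξ η
      simp [inner_add_left]
  smul_left u v r := by
    rw [Finsupp.sum_smul_index']
    · simp only [inner_smul_left, Finsupp.sum, Finset.mul_sum]
    · intro x
      simp

theorem exists_gns (hM : IsVNA M) : ∃ (K : HilbS) (L : X.X → H.carrier →L[ℂ] K.carrier),
    (∀ x y ξ η, ⟪L x ξ, L y η⟫ = ⟪ξ, X.ip x y η⟫) ∧
    (∀ k, (∀ x ξ, ⟪L x ξ, k⟫ = 0) → k = 0) ∧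
    (∀ (E : HilbS) (t : X.X → H.carrier →L[ℂ] E.carrier) (C : ℝ), 0 ≤ C →
      (∀ w : X.X →₀ H.carrier, ‖w.sum fun x ξ => t x ξ‖ ≤ C * ‖w.sum fun x ξ => L x ξ‖) →
      ∃ T : K.carrier →L[ℂ] E.carrier, (∀ x ξ, T (L x ξ) = t x ξ) ∧ ‖T‖ ≤ C) := by
  let cd := gnsCore X hM
  let _ : SeminormedAddCommGroup (X.X →₀ H.carrier) :=
    @InnerProductSpace.Core.toSeminormedAddCommGroup ℂ _ _ _ _ cd
  let _ : InnerProductSpace ℂ (X.X →₀ H.carrier) := InnerProductSpace.ofCore cd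
  have hin : ∀ u v : X.X →₀ H.carrier,
      ⟪u, v⟫ = u.sum fun x ξ => v.sum fun y η => ⟪ξ, X.ip x y η⟫ := fun u v => rfl
  let e : (X.X →₀ H.carrier) →ₗ[ℂ] UniformSpace.Completion (X.X →₀ H.carrier) :=
    (UniformSpace.Completion.toComplₗᵢ (𝕜 := ℂ) (E := X.X →₀ H.carrier)).toLinearMap
  have he : DenseRange e := UniformSpace.Completion.denseRange_coe
  have hein : ∀ u v, ⟪e u, e v⟫ = ⟪u, v⟫ := fun u v => UniformSpace.Completion.inner_coe u v
  have hs : ∀ x y ξ η, ⟪e (Finsupp.single x ξ), e (Finsupp.single y η)⟫ = ⟪ξ, X.ip x y η⟫ := by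
    intro x y ξ η
    rw [hein, hin, Finsupp.sum_single_index, Finsupp.sum_single_index] <;> simp
  let L : X.X → H.carrier →L[ℂ] UniformSpace.Completion (X.X →₀ H.carrier) := fun x =>
    (e.comp (Finsupp.lsingle x)).mkContinuous (X.modNorm x) (by
      intro ξ
      refine le_of_sq_le_sq ?_ (mul_nonneg (modNorm_nonneg X x) (norm_nonneg _))
      rw [mul_pow, modNorm_sq, @norm_sq_eq_re_inner ℂ]
      change (⟪e (Finsupp.single x ξ), e (Finsupp.single x ξ)⟫).re ≤ _
      rw [hs]
      refine (Complex.re_le_norm _).trans ((norm_inner_le_norm _ _).trans ?_)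
      have := (X.ip x x).le_opNorm ξ
      nlinarith [norm_nonneg ξ])
  have hL : ∀ x ξ, L x ξ = e (Finsupp.single x ξ) := fun x ξ => rfl
  have hsum : ∀ w : X.X →₀ H.carrier, (w.sum fun x ξ => L x ξ) = e w := by
    intro w
    conv_rhs => rw [← Finsupp.sum_single w]
    rw [map_finsuppSum]
    rfl
  refine ⟨⟨UniformSpace.Completion (X.X →₀ H.carrier)⟩, L, ?_, ?_, ?_⟩
  · intro x y ξ η
    exact hs x y ξ η
  · intro k hk
    have h1 : ∀ w, ⟪e w, k⟫ = 0 := by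
      intro w
      rw [← hsum, Finsupp.sum, sum_inner]
      exact Finset.sum_eq_zero fun i _ => hk _ _
    have h2 : ∀ v, ⟪v, k⟫ = 0 := by
      intro v
      have hcl : IsClosed {v | ⟪v, k⟫ = 0} := isClosed_eq (by fun_prop) continuous_const
      exact he.induction_on v hcl h1
    exact inner_self_eq_zero.1 (h2 k)
  · intro E t C hC hb
    let f : (X.X →₀ H.carrier) →ₗ[ℂ] E.carrier := Finsupp.lsum ℂ fun x => (t x).toLinearMap
    have hf : ∀ w, f w = w.sum fun x ξ => t x ξ := fun w => rfl
    have hn : ∀ w, ‖f w‖ ≤ C * ‖e w‖ := fun w => by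
      rw [hf, ← hsum]
      exact hb w
    refine ⟨f.extendOfNorm e, ?_, LinearMap.opNorm_extendOfNorm_le he hC hn⟩
    intro x ξ
    change f.extendOfNorm e (e (Finsupp.single x ξ)) = _
    rw [LinearMap.extendOfNorm_eq he ⟨C, hn⟩, hf, Finsupp.sum_single_index]
    simp

end modlemmas

theorem commute_sqrt {H : HilbS} {a c : B H} (h : a * c = c * a) :
    CFC.sqrt a * c = c * CFC.sqrt a := by
  unfold CFC.sqrt
  exact Commute.cfcₙ_nnreal (show Commute a c from h) _

theorem vna_sub {H : HilbS} {M : Set (B H)} (hM : IsVNA M) {x y : B H}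
    (hx : x ∈ M) (hy : y ∈ M) : x - y ∈ M := by
  rw [vna_mem_iff hM] at *
  intro c hc
  rw [mul_sub, sub_mul, hx c hc, hy c hc]

/-- A positive element plus `ε` has an invertible square root in the algebra. -/
theorem exists_sqrt_inv {H : HilbS} {M : Set (B H)} (hM : IsVNA M) {a : B H} (ha : a ∈ M)
    (hpos : 0 ≤ a) {ε : ℝ} (hε : 0 < ε) :
    ∃ s b : B H, b ∈ M ∧ star b = b ∧ star s = s ∧ s * s = a + (ε : ℂ) • 1 ∧ b * s = 1 ∧
      ‖b * a * b‖ ≤ 1 := by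
  have hε0 : (0 : B H) ≤ (ε : ℂ) • 1 :=
    smul_nonneg (by exact_mod_cast hε.le) zero_le_one
  have hd : (0 : B H) ≤ a + (ε : ℂ) • 1 := add_nonneg hpos hε0
  have hu : IsUnit (a + (ε : ℂ) • (1 : B H)) := by
    refine CStarAlgebra.isUnit_of_le ((ε : ℂ) • (1 : B H)) (le_add_of_nonneg_left hpos) ?_
    rw [IsStrictlyPositive.iff_of_unital]
    refine ⟨hε0, ?_⟩
    rw [← Algebra.algebraMap_eq_smul_one]
    exact (IsUnit.mk0 (ε : ℂ) (by exact_mod_cast hε.ne')).map (algebraMap ℂ (B H))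
  have hus : IsUnit (CFC.sqrt (a + (ε : ℂ) • (1 : B H))) := (CFC.isUnit_sqrt_iff _ hd).2 hu
  obtain ⟨u, hus⟩ := hus
  have hss : star (u : B H) = u := by
    rw [hus]
    exact (CFC.sqrt_nonneg _).isSelfAdjoint
  have hsq : (u : B H) * u = a + (ε : ℂ) • 1 := by
    rw [hus]
    exact CFC.sqrt_mul_sqrt_self _ hd
  have hbs : star ((u⁻¹ : (B H)ˣ) : B H) = ((u⁻¹ : (B H)ˣ) : B H) := by
    rw [← Units.coe_star, star_inv]
    congr 2
    exact Units.ext hss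
  refine ⟨u, (u⁻¹ : (B H)ˣ), ?_, hbs, hss, hsq, u.inv_mul, ?_⟩
  · rw [vna_mem_iff hM]
    intro c hc
    have h1 : (a + (ε : ℂ) • 1) * c = c * (a + (ε : ℂ) • 1) := by
      rw [add_mul, mul_add, vna_comm ha hc]
      simp
    have h2 : Commute (u : B H) c := by
      rw [hus]
      exact commute_sqrt h1
    exact (h2.units_inv_left).eq.symm
  · have hc0 : 0 ≤ ((u⁻¹ : (B H)ˣ) : B H) * a * ((u⁻¹ : (B H)ˣ) : B H) := by
      have := star_left_conjugate_nonneg hpos ((u⁻¹ : (B H)ˣ) : B H)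
      rwa [hbs] at this
    rw [CStarAlgebra.norm_le_one_iff_of_nonneg _ hc0]
    have h3 : a ≤ (u : B H) * u := by
      rw [hsq]
      exact le_add_of_nonneg_right hε0
    have := star_left_conjugate_le_conjugate h3 ((u⁻¹ : (B H)ˣ) : B H)
    rw [hbs] at this
    refine this.trans (le_of_eq ?_)
    simp

section fun_ext

variable {H : HilbS} {M : Set (B H)} (X : PreHilbMod M)

theorem modular_sq_le (hM : IsVNA M) (f : X.X → B H)
    (f_act : ∀ x, ∀ b ∈ M, f (X.act x b) = f x * b) (C : ℝ) (hC : 0 ≤ C)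
    (hf : ∀ x, ‖f x‖ ≤ C * X.modNorm x) (x : X.X) (ζ : H.carrier) :
    ‖f x ζ‖ ^ 2 ≤ C ^ 2 * (⟪ζ, X.ip x x ζ⟫).re := by
  have key : ∀ ε : ℝ, 0 < ε →
      ‖f x ζ‖ ^ 2 ≤ C ^ 2 * ((⟪ζ, X.ip x x ζ⟫).re + ε * ‖ζ‖ ^ 2) := by
    intro ε hε
    have hpos : 0 ≤ X.ip x x := (ContinuousLinearMap.nonneg_iff_isPositive _).2 (X.ip_pos x)
    obtain ⟨s, b, hb, hbs, hss, hsq, hbu, hn⟩ := exists_sqrt_inv hM (X.ip_mem x x) hpos hε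
    have h1 : X.modNorm (X.act x b) ≤ 1 := by
      unfold PreHilbMod.modNorm
      rw [X.ip_act _ _ _ hb, ip_act_left X _ _ _ hb, hbs]
      exact Real.sqrt_le_one.2 hn
    have h2 : f x ζ = f (X.act x b) (s ζ) := by
      rw [f_act _ _ hb]
      change _ = (f x * b * s) ζ
      rw [mul_assoc, hbu, mul_one]
    have h3 : ‖f x ζ‖ ≤ C * ‖s ζ‖ := by
      rw [h2]
      refine ((f (X.act x b)).le_opNorm _).trans ?_
      refine mul_le_mul_of_nonneg_right ?_ (norm_nonneg _)
      refine (hf _).trans ?_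
      nlinarith
    have h4 : ‖s ζ‖ ^ 2 = (⟪ζ, X.ip x x ζ⟫).re + ε * ‖ζ‖ ^ 2 := by
      rw [@norm_sq_eq_re_inner ℂ]
      have h5 : ⟪s ζ, s ζ⟫ = ⟪ζ, (s * s) ζ⟫ := by
        conv_lhs => rw [← hss]
        rw [inner_star_left, hss]
        rfl
      have h6 : (s * s) ζ = X.ip x x ζ + (ε : ℂ) • ζ := by
        rw [hsq]
        rfl
      rw [h5, h6, inner_add_right, inner_smul_right, inner_self_eq_norm_sq_to_K]
      simp [← Complex.ofReal_pow]
    calc ‖f x ζ‖ ^ 2 ≤ (C * ‖s ζ‖) ^ 2 := by gcongr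
      _ = _ := by rw [mul_pow, h4]
  refine le_of_forall_pos_le_add fun δ hδ => ?_
  have hD : 0 < C ^ 2 * ‖ζ‖ ^ 2 + 1 := by positivity
  have h := key (δ / (C ^ 2 * ‖ζ‖ ^ 2 + 1)) (div_pos hδ hD)
  refine h.trans ?_
  rw [mul_add]
  gcongr
  rw [div_mul_eq_mul_div, mul_div_assoc', div_le_iff₀ hD]
  nlinarith

theorem norm_sum_sq {E : HilbS} (t : X.X → H.carrier →L[ℂ] E.carrier) (a : X.X → X.X → B H)
    (h : ∀ x y ξ η, ⟪t x ξ, t y η⟫ = ⟪ξ, a x y η⟫) (w : X.X →₀ H.carrier) :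
    ‖w.sum fun x ξ => t x ξ‖ ^ 2 = qf a w.support w := by
  rw [@norm_sq_eq_re_inner ℂ]
  unfold qf
  simp only [Finsupp.sum, sum_inner, inner_sum, h]
  rw [Finset.sum_comm]
  rfl

theorem qf_sub {I : Type} (a a' : I → I → B H) (r : ℝ) (s : Finset I) (ξ : I → H.carrier) :
    qf (fun i j => (r : ℂ) • a i j - a' i j) s ξ = r * qf a s ξ - qf a' s ξ := by
  unfold qf
  simp [inner_sub_right, inner_smul_right, Finset.mul_sum]

theorem modular_sum_le (hM : IsVNA M) (f : X.X → B H)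
    (f_add : ∀ x y, f (x + y) = f x + f y)
    (f_act : ∀ x, ∀ b ∈ M, f (X.act x b) = f x * b) (f_mem : ∀ x, f x ∈ M)
    (C : ℝ) (hC : 0 ≤ C) (hf : ∀ x, ‖f x‖ ≤ C * X.modNorm x)
    (w : X.X →₀ H.carrier) :
    ‖w.sum fun x ξ => f x ξ‖ ^ 2 ≤ C ^ 2 * qf X.ip w.support w := by
  have hin : ∀ x y ξ η, ⟪f x ξ, f y η⟫ = ⟪ξ, (star (f x) * f y) η⟫ := by
    intro x y ξ η
    change _ = ⟪ξ, star (f x) (f y η)⟫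
    rw [← inner_star_left (star (f x)), star_star]
  rw [norm_sum_sq X (E := H) f _ hin, ← sub_nonneg, ← qf_sub]
  refine qf_nonneg hM _ (fun i j => vna_sub hM (vna_smul hM _ (X.ip_mem i j))
    (vna_mul hM (hM.1 _ (f_mem i)) (f_mem j))) _ (fun ζ b hb => ?_) _
  rw [qf_sub, sub_nonneg]
  have h1 : qf X.ip w.support (fun i => b i ζ) = (⟪ζ, X.ip (∑ i ∈ w.support, X.act i (b i))
      (∑ i ∈ w.support, X.act i (b i)) ζ⟫).re := by
    rw [ip_comb X _ b hb]
    rfl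
  have h2 : qf (fun x y => star (f x) * f y) w.support (fun i => b i ζ) =
      ‖f (∑ i ∈ w.support, X.act i (b i)) ζ‖ ^ 2 := by
    have h3 : f (∑ i ∈ w.support, X.act i (b i)) = ∑ i ∈ w.support, f i * b i := by
      rw [show f (∑ i ∈ w.support, X.act i (b i)) = ∑ i ∈ w.support, f (X.act i (b i)) from
        map_sum (AddMonoidHom.mk' f f_add) _ _]
      exact Finset.sum_congr rfl fun i _ => f_act _ _ (hb i)
    rw [@norm_sq_eq_re_inner ℂ, h3]
    unfold qf
    simp only [sum_apply, sum_inner, inner_sum, ← hin]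
    rw [Finset.sum_comm]
    rfl
  rw [h1, h2]
  exact modular_sq_le X hM f f_act C hC hf _ ζ

theorem qf_comm_le (hM : IsVNA M) (c : B H) (hc : c ∈ commutant M) (s : Finset X.X)
    (ξ : X.X → H.carrier) :
    qf X.ip s (fun i => c (ξ i)) ≤ ‖c‖ ^ 2 * qf X.ip s ξ := by
  have hnn : (0 : B H) ≤ ((‖c‖ ^ 2 : ℝ) : ℂ) • 1 - star c * c := by
    rw [sub_nonneg]
    have := CStarAlgebra.star_mul_le_algebraMap_norm_sq (a := c)
    rw [Algebra.algebraMap_eq_smul_one] at this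
    exact this
  set D : B H := ((‖c‖ ^ 2 : ℝ) : ℂ) • 1 - star c * c with hD
  have hdd := CFC.sqrt_mul_sqrt_self D hnn
  have hds : star (CFC.sqrt D) = CFC.sqrt D := (CFC.sqrt_nonneg _).isSelfAdjoint
  have hdc : ∀ m ∈ M, m * CFC.sqrt D = CFC.sqrt D * m := by
    intro m hm
    refine (commute_sqrt ?_).symm
    rw [hD, sub_mul, mul_sub, mul_assoc, ← vna_comm hm hc, ← mul_assoc,
      ← vna_comm hm (comm_star hM hc), mul_assoc]
    simp
  rw [← sub_nonneg]
  have : ‖c‖ ^ 2 * qf X.ip s ξ - qf X.ip s (fun i => c (ξ i)) =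
      qf X.ip s (fun i => CFC.sqrt D (ξ i)) := by
    unfold qf
    rw [← Complex.re_ofReal_mul, ← Complex.sub_re, Finset.mul_sum, ← Finset.sum_sub_distrib]
    simp_rw [Finset.mul_sum, ← Finset.sum_sub_distrib]
    congr 1
    refine Finset.sum_congr rfl fun i _ => Finset.sum_congr rfl fun j _ => ?_
    have h1 : ⟪CFC.sqrt D (ξ i), X.ip i j (CFC.sqrt D (ξ j))⟫ = ⟪D (ξ i), X.ip i j (ξ j)⟫ := by
      have : X.ip i j (CFC.sqrt D (ξ j)) = CFC.sqrt D (X.ip i j (ξ j)) :=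
        congrArg (fun T : B H => T (ξ j)) (hdc _ (X.ip_mem i j))
      rw [this, ← inner_star_left, hds]
      conv_rhs => rw [← hdd]
      rfl
    have h2 : ⟪c (ξ i), X.ip i j (c (ξ j))⟫ = ⟪(star c * c) (ξ i), X.ip i j (ξ j)⟫ := by
      have : X.ip i j (c (ξ j)) = c (X.ip i j (ξ j)) :=
        congrArg (fun T : B H => T (ξ j)) (vna_comm (X.ip_mem i j) hc)
      rw [this, ← inner_star_left]
      rfl
    have h3 : D (ξ i) = ((‖c‖ ^ 2 : ℝ) : ℂ) • ξ i - (star c * c) (ξ i) := rfl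
    rw [h1, h2, h3, inner_sub_left, inner_smul_left, Complex.conj_ofReal]
  rw [this]
  exact ip_qf_nonneg X hM _ _

/-- Cauchy-Schwarz. -/
theorem ip_norm_le (hM : IsVNA M) (x y : X.X) : ‖X.ip x y‖ ≤ X.modNorm x * X.modNorm y := by
  obtain ⟨K, L, hin, -, -⟩ := exists_gns X hM
  have hL : ∀ x, ‖L x‖ ≤ X.modNorm x := by
    intro x
    refine ContinuousLinearMap.opNorm_le_bound _ (modNorm_nonneg X x) fun ξ => ?_
    refine le_of_sq_le_sq ?_ (mul_nonneg (modNorm_nonneg X x) (norm_nonneg _))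
    rw [mul_pow, modNorm_sq, @norm_sq_eq_re_inner ℂ, hin]
    refine (Complex.re_le_norm _).trans ((norm_inner_le_norm _ _).trans ?_)
    have := (X.ip x x).le_opNorm ξ
    nlinarith [norm_nonneg ξ]
  have h : X.ip x y = (ContinuousLinearMap.adjoint (L x)).comp (L y) := by
    refine ContinuousLinearMap.ext fun η => ext_inner_left ℂ fun ξ => ?_
    rw [← hin, ContinuousLinearMap.comp_apply, ContinuousLinearMap.adjoint_inner_right]
  rw [h]
  refine (ContinuousLinearMap.opNorm_comp_le _ _).trans ?_
  rw [LinearIsometryEquiv.norm_map]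
  exact mul_le_mul (hL x) (hL y) (norm_nonneg _) (modNorm_nonneg X x)

theorem gns_norm_le {K : HilbS} (L : X.X → H.carrier →L[ℂ] K.carrier)
    (hin : ∀ x y ξ η, ⟪L x ξ, L y η⟫ = ⟪ξ, X.ip x y η⟫) (x : X.X) : ‖L x‖ ≤ X.modNorm x := by
  refine ContinuousLinearMap.opNorm_le_bound _ (modNorm_nonneg X x) fun ξ => ?_
  refine le_of_sq_le_sq ?_ (mul_nonneg (modNorm_nonneg X x) (norm_nonneg _))
  rw [mul_pow, modNorm_sq, @norm_sq_eq_re_inner ℂ, hin]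
  refine (Complex.re_le_norm _).trans ((norm_inner_le_norm _ _).trans ?_)
  have := (X.ip x x).le_opNorm ξ
  nlinarith [norm_nonneg ξ]

theorem ext_functional (hM : IsVNA M) (c : SelfDualCompletion X) (f : X.X → B H)
    (f_add : ∀ x y, f (x + y) = f x + f y)
    (f_act : ∀ x, ∀ b ∈ M, f (X.act x b) = f x * b) (f_mem : ∀ x, f x ∈ M)
    (C : ℝ) (hC : 0 ≤ C) (hf : ∀ x, ‖f x‖ ≤ C * X.modNorm x) :
    ∃ y₀, (∀ x, f x = c.Y.ip y₀ (c.ι x)) ∧ c.Y.modNorm y₀ ≤ C := by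
  obtain ⟨K, L, hin, hsep, huniv⟩ := exists_gns X hM
  obtain ⟨K', L', hin', hsep', -⟩ := exists_gns c.Y hM
  have hsq : ∀ w : X.X →₀ H.carrier, ‖w.sum fun x ξ => L x ξ‖ ^ 2 = qf X.ip w.support w :=
    norm_sum_sq X L _ hin
  obtain ⟨T, hT, hTn⟩ := huniv H f C hC (by
    intro w
    refine le_of_sq_le_sq ?_ (by positivity)
    rw [mul_pow, hsq]
    exact modular_sum_le X hM f f_add f_act f_mem C hC hf w)
  obtain ⟨J, hJ, hJn⟩ := huniv K' (fun x => L' (c.ι x)) 1 zero_le_one (by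
    intro w
    refine le_of_sq_le_sq ?_ (by positivity)
    rw [mul_pow, hsq, norm_sum_sq X (fun x => L' (c.ι x)) X.ip, one_pow, one_mul]
    intro x y ξ η
    rw [hin', c.ι_ip])
  have hV : ∀ a ∈ commutant M, ∃ V : K.carrier →L[ℂ] K.carrier, ∀ x ξ, V (L x ξ) = L x (a ξ) := by
    intro a ha
    obtain ⟨V, hV, -⟩ := huniv K (fun x => (L x).comp a) ‖a‖ (norm_nonneg _) (by
      intro w
      refine le_of_sq_le_sq ?_ (by positivity)
      rw [mul_pow, hsq]
      refine le_trans (le_of_eq ?_) (qf_comm_le X hM a ha _ _)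
      rw [@norm_sq_eq_re_inner ℂ]
      unfold qf
      simp only [Finsupp.sum, sum_inner, inner_sum, ContinuousLinearMap.comp_apply, hin]
      rw [Finset.sum_comm]
      rfl)
    exact ⟨V, hV⟩
  have hKe : ∀ k k' : K.carrier, (∀ x ξ, ⟪L x ξ, k⟫ = ⟪L x ξ, k'⟫) → k = k' := by
    intro k k' h
    refine sub_eq_zero.1 (hsep _ fun x ξ => ?_)
    rw [inner_sub_right, h, sub_self]
  have hKe' : ∀ k k' : K'.carrier, (∀ x ξ, ⟪L' x ξ, k⟫ = ⟪L' x ξ, k'⟫) → k = k' := by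
    intro k k' h
    refine sub_eq_zero.1 (hsep' _ fun x ξ => ?_)
    rw [inner_sub_right, h, sub_self]
  let J' := ContinuousLinearMap.adjoint J
  have hJ'in : ∀ x ξ k, ⟪L x ξ, J' k⟫ = ⟪L' (c.ι x) ξ, k⟫ := by
    intro x ξ k
    rw [ContinuousLinearMap.adjoint_inner_right, hJ]
  let g : c.Y.X → B H := fun y => T.comp (J'.comp (L' y))
  have hg : ∀ y ξ, g y ξ = T (J' (L' y ξ)) := fun y ξ => rfl
  have hLadd : ∀ y z, L' (y + z) = L' y + L' z := by
    intro y z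
    refine ContinuousLinearMap.ext fun ξ => hKe' _ _ fun x η => ?_
    rw [hin', c.Y.ip_add_right]
    simp only [add_apply, inner_add_right, hin']
  have hLsmul : ∀ (r : ℂ) y, L' (r • y) = r • L' y := by
    intro r y
    refine ContinuousLinearMap.ext fun ξ => hKe' _ _ fun x η => ?_
    rw [hin', c.Y.ip_smul_right]
    simp only [smul_apply, inner_smul_right, hin']
  have hLact : ∀ y, ∀ b ∈ M, L' (c.Y.act y b) = (L' y).comp b := by
    intro y b hb
    refine ContinuousLinearMap.ext fun ξ => hKe' _ _ fun x η => ?_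
    rw [hin', c.Y.ip_act _ _ _ hb, ContinuousLinearMap.comp_apply, hin']
    rfl
  have gbd : ∀ y, ‖g y‖ ≤ C * c.Y.modNorm y := by
    intro y
    have h1 : ‖J'‖ ≤ 1 := by
      rw [LinearIsometryEquiv.norm_map]
      exact hJn
    refine (ContinuousLinearMap.opNorm_comp_le _ _).trans ?_
    refine mul_le_mul hTn ?_ (norm_nonneg _) hC
    refine (ContinuousLinearMap.opNorm_comp_le _ _).trans ?_
    have := gns_norm_le c.Y L' hin' y
    nlinarith [norm_nonneg J', norm_nonneg (L' y)]
  obtain ⟨y₀, hy₀⟩ := c.selfDual g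
    (by
      intro y z
      refine ContinuousLinearMap.ext fun ξ => ?_
      simp only [hg, hLadd, add_apply, map_add])
    (by
      intro r y
      refine ContinuousLinearMap.ext fun ξ => ?_
      simp only [hg, hLsmul, smul_apply, map_smul])
    (by
      intro y b hb
      refine ContinuousLinearMap.ext fun ξ => ?_
      rw [hg, hLact _ _ hb]
      rfl)
    (by
      intro y
      rw [vna_mem_iff hM]
      intro a ha
      obtain ⟨V, hV1⟩ := hV a ha
      have hVs : ∀ x ξ k, ⟪L x ξ, V k⟫ = ⟪L x (star a ξ), k⟫ := by
        intro x ξ k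
        rw [← ContinuousLinearMap.adjoint_inner_left]
        congr 1
        refine hKe _ _ fun z η => ?_
        rw [ContinuousLinearMap.adjoint_inner_right, hV1, hin, hin]
        have h1 : X.ip z x (star a ξ) = star a (X.ip z x ξ) :=
          congrArg (fun S : B H => S ξ) (vna_comm (X.ip_mem z x) (comm_star hM ha))
        rw [h1, ← inner_star_left (star a), star_star]
      have hTV : ∀ k, T (V k) = a (T k) := by
        intro k
        refine ext_inner_left ℂ fun η => ?_
        rw [← inner_star_left, ← ContinuousLinearMap.adjoint_inner_left T,
          ← ContinuousLinearMap.adjoint_inner_left V, ← ContinuousLinearMap.adjoint_inner_left T]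
        congr 1
        refine hKe _ _ fun x ξ => ?_
        rw [ContinuousLinearMap.adjoint_inner_right, ContinuousLinearMap.adjoint_inner_right,
          ContinuousLinearMap.adjoint_inner_right, hV1, hT, hT, ← inner_star_left (star a),
          star_star]
        congr 1
        exact congrArg (fun S : B H => S ξ) (vna_comm (f_mem x) ha)
      refine ContinuousLinearMap.ext fun ξ => ?_
      change a (T (J' (L' y ξ))) = T (J' (L' y (a ξ)))
      rw [← hTV]
      congr 1
      refine hKe _ _ fun x η => ?_
      rw [hVs, hJ'in, hJ'in, hin', hin', inner_star_left]
      congr 1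
      exact congrArg (fun S : B H => S ξ) (vna_comm (c.Y.ip_mem (c.ι x) y) ha).symm)
    ⟨C, gbd⟩
  refine ⟨y₀, fun x => ?_, ?_⟩
  · rw [← hy₀]
    refine ContinuousLinearMap.ext fun ξ => ?_
    rw [hg, ← hT]
    congr 1
    refine hKe _ _ fun z η => ?_
    rw [hJ'in, hin, hin', c.ι_ip]
  · have h1 := gbd y₀
    rw [hy₀, ← modNorm_sq] at h1
    have h2 := modNorm_nonneg c.Y y₀
    by_contra hlt
    push Not at hlt
    nlinarith

end fun_ext

/-- A pair of mutually inverse star isomorphisms between two operator algebras. -/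
structure VIso {H1 H2 : HilbS} (M1 : Set (B H1)) (M2 : Set (B H2))
    (φ : B H1 → B H2) (ψ : B H2 → B H1) : Prop where
  hom : IsStarHomOn M1 1 1 φ
  hom' : IsStarHomOn M2 1 1 ψ
  maps : ∀ b ∈ M1, φ b ∈ M2
  maps' : ∀ b ∈ M2, ψ b ∈ M1
  left_inv : ∀ b ∈ M1, ψ (φ b) = b
  right_inv : ∀ b ∈ M2, φ (ψ b) = b
  norm_eq : ∀ b ∈ M1, ‖φ b‖ = ‖b‖

theorem VIso.symm {H1 H2 : HilbS} {M1 : Set (B H1)} {M2 : Set (B H2)}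
    {φ : B H1 → B H2} {ψ : B H2 → B H1} (I : VIso M1 M2 φ ψ) : VIso M2 M1 ψ φ where
  hom := I.hom'
  hom' := I.hom
  maps := I.maps'
  maps' := I.maps
  left_inv := I.right_inv
  right_inv := I.left_inv
  norm_eq b hb := by rw [← I.norm_eq _ (I.maps' b hb), I.right_inv b hb]

theorem viso_id {H1 : HilbS} (M1 : Set (B H1)) : VIso M1 M1 id id :=
  ⟨⟨fun _ _ _ _ => rfl, fun _ _ _ => rfl, fun _ _ _ _ => rfl, fun _ _ => rfl, rfl⟩,
   ⟨fun _ _ _ _ => rfl, fun _ _ _ => rfl, fun _ _ _ _ => rfl, fun _ _ => rfl, rfl⟩,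
   fun _ h => h, fun _ h => h, fun _ _ => rfl, fun _ _ => rfl, fun _ _ => rfl⟩

theorem hom_norm_eq {H1 H2 : HilbS} {M1 : Set (B H1)} (hM : IsVNA M1)
    (φ : B H1 → B H2) (hφ : IsStarHomOn M1 1 1 φ) (hinj : InjOn φ M1) (b : B H1) (hb : b ∈ M1) :
    ‖φ b‖ = ‖b‖ := by
  let S : StarSubalgebra ℂ (B H1) :=
    { carrier := M1
      mul_mem' := fun ha hb => vna_mul hM ha hb
      add_mem' := fun ha hb => vna_add hM ha hb
      algebraMap_mem' := fun r => by
        rw [Algebra.algebraMap_eq_smul_one]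
        exact vna_smul hM r (vna_one hM)
      star_mem' := fun {a} ha => hM.1 a ha }
  have hcl : IsClosed (S : Set (B H1)) := by
    change IsClosed M1
    rw [← hM.2]
    exact Set.isClosed_centralizer _
  let Φ : S →⋆ₐ[ℂ] B H2 :=
    { toFun := fun a => φ a
      map_one' := hφ.map_unit
      map_mul' := fun a b => hφ.map_mul a a.2 b b.2
      map_zero' := by
        have := hφ.map_smul 0 1 (vna_one hM)
        simpa using this
      map_add' := fun a b => hφ.map_add a a.2 b b.2
      commutes' := fun r => by
        change φ (algebraMap ℂ (B H1) r) = _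
        rw [Algebra.algebraMap_eq_smul_one, hφ.map_smul r 1 (vna_one hM), hφ.map_unit,
          Algebra.algebraMap_eq_smul_one]
      map_star' := fun a => hφ.map_star a a.2 }
  have hΦ : Function.Injective Φ := fun a b h => Subtype.ext (hinj a.2 b.2 h)
  exact NonUnitalStarAlgHom.norm_map Φ hΦ ⟨b, hb⟩

theorem exists_viso {H1 H2 : HilbS} {M1 : Set (B H1)} {M2 : Set (B H2)} (hM : IsVNA M1)
    (φ : B H1 → B H2) (hφ : IsStarHomOn M1 1 1 φ) (hinj : InjOn φ M1) (himg : φ '' M1 = M2) :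
    ∃ ψ, VIso M1 M2 φ ψ := by
  have hex : ∀ b : B H2, ∃ a : B H1, b ∈ M2 → a ∈ M1 ∧ φ a = b := by
    intro b
    by_cases hb : b ∈ M2
    · rw [← himg] at hb
      obtain ⟨a, ha, hab⟩ := hb
      exact ⟨a, fun _ => ⟨ha, hab⟩⟩
    · exact ⟨0, fun h => absurd h hb⟩
  choose ψ hψ using hex
  have hmaps : ∀ b ∈ M1, φ b ∈ M2 := fun b hb => himg ▸ mem_image_of_mem φ hb
  have hmem : ∀ b ∈ M2, ψ b ∈ M1 := fun b hb => (hψ b hb).1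
  have hri : ∀ b ∈ M2, φ (ψ b) = b := fun b hb => (hψ b hb).2
  have hli : ∀ b ∈ M1, ψ (φ b) = b := fun b hb =>
    hinj (hmem _ (hmaps b hb)) hb (hri _ (hmaps b hb))
  refine ⟨ψ, hφ, ?_, hmaps, hmem, hli, hri, hom_norm_eq hM φ hφ hinj⟩
  refine ⟨?_, ?_, ?_, ?_, ?_⟩
  · intro x hx y hy
    rw [← hli _ (vna_add hM (hmem x hx) (hmem y hy)),
      hφ.map_add _ (hmem x hx) _ (hmem y hy), hri x hx, hri y hy]
  · intro c x hx
    rw [← hli _ (vna_smul hM c (hmem x hx)), hφ.map_smul _ _ (hmem x hx), hri x hx]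
  · intro x hx y hy
    rw [← hli _ (vna_mul hM (hmem x hx) (hmem y hy)),
      hφ.map_mul _ (hmem x hx) _ (hmem y hy), hri x hx, hri y hy]
  · intro x hx
    rw [← hli _ (hM.1 _ (hmem x hx)), hφ.map_star _ (hmem x hx), hri x hx]
  · rw [← hφ.map_unit]
    exact hli 1 (vna_one hM)

section main

variable {H1 H2 : HilbS} {M1 : Set (B H1)} {M2 : Set (B H2)}

theorem ι_modNorm {X : PreHilbMod M1} (c : SelfDualCompletion X) (x : X.X) :
    c.Y.modNorm (c.ι x) = X.modNorm x := by
  unfold PreHilbMod.modNorm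
  rw [c.ι_ip]

theorem sdc_ext {X : PreHilbMod M1} (c : SelfDualCompletion X) {y z : c.Y.X}
    (h : ∀ x, c.Y.ip y (c.ι x) = c.Y.ip z (c.ι x)) : y = z := by
  refine sub_eq_zero.1 (c.separating _ fun x => ?_)
  rw [ip_sub_right, ← c.Y.ip_star, h, c.Y.ip_star, sub_self]

theorem ext_unique (hM2 : IsVNA M2) {φ : B H1 → B H2} {ψ : B H2 → B H1} (I : VIso M1 M2 φ ψ)
    {X1 : PreHilbMod M1} (c1 : SelfDualCompletion X1) (Y2 : PreHilbMod M2)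
    (k k' : c1.Y.X → Y2.X)
    (k_add : ∀ x y, k (x + y) = k x + k y) (k_smul : ∀ (c : ℂ) x, k (c • x) = c • k x)
    (k_bdd : ∃ C : ℝ, ∀ y, Y2.modNorm (k y) ≤ C * c1.Y.modNorm y)
    (k_mod : ∀ y, ∀ b ∈ M1, k (c1.Y.act y b) = Y2.act (k y) (φ b))
    (k_add' : ∀ x y, k' (x + y) = k' x + k' y) (k_smul' : ∀ (c : ℂ) x, k' (c • x) = c • k' x)
    (k_bdd' : ∃ C : ℝ, ∀ y, Y2.modNorm (k' y) ≤ C * c1.Y.modNorm y)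
    (k_mod' : ∀ y, ∀ b ∈ M1, k' (c1.Y.act y b) = Y2.act (k' y) (φ b))
    (heq : ∀ x, k (c1.ι x) = k' (c1.ι x)) : k = k' := by
  have adj : ∀ k : c1.Y.X → Y2.X,
      (∀ x y, k (x + y) = k x + k y) → (∀ (c : ℂ) x, k (c • x) = c • k x) →
      (∃ C : ℝ, ∀ y, Y2.modNorm (k y) ≤ C * c1.Y.modNorm y) →
      (∀ y, ∀ b ∈ M1, k (c1.Y.act y b) = Y2.act (k y) (φ b)) →
      ∀ z, ∃ w, ∀ y, ψ (Y2.ip z (k y)) = c1.Y.ip w y := by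
    intro k h1 h2 h3 h4 z
    obtain ⟨C, hC⟩ := h3
    refine c1.selfDual _ ?_ ?_ ?_ ?_ ⟨Y2.modNorm z * C, ?_⟩
    · intro x y
      rw [h1, Y2.ip_add_right, I.hom'.map_add _ (Y2.ip_mem _ _) _ (Y2.ip_mem _ _)]
    · intro c x
      rw [h2, Y2.ip_smul_right, I.hom'.map_smul _ _ (Y2.ip_mem _ _)]
    · intro x b hb
      rw [h4 _ _ hb, Y2.ip_act _ _ _ (I.maps b hb),
        I.hom'.map_mul _ (Y2.ip_mem _ _) _ (I.maps b hb), I.left_inv b hb]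
    · intro x
      exact I.maps' _ (Y2.ip_mem _ _)
    · intro x
      rw [I.symm.norm_eq _ (Y2.ip_mem _ _), mul_assoc]
      exact (ip_norm_le Y2 hM2 _ _).trans
        (mul_le_mul_of_nonneg_left (hC x) (modNorm_nonneg Y2 z))
  funext y
  refine ip_ext_right Y2 fun z => ?_
  obtain ⟨w, hw⟩ := adj k k_add k_smul k_bdd k_mod z
  obtain ⟨w', hw'⟩ := adj k' k_add' k_smul' k_bdd' k_mod' z
  have hww : w = w' := sdc_ext c1 fun x => by rw [← hw, ← hw', heq]
  rw [← I.right_inv _ (Y2.ip_mem z (k y)), ← I.right_inv _ (Y2.ip_mem z (k' y)), hw, hw', hww]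

theorem ext_exists (hM1 : IsVNA M1) (hM2 : IsVNA M2)
    {φ : B H1 → B H2} {ψ : B H2 → B H1} (I : VIso M1 M2 φ ψ)
    {X1 : PreHilbMod M1} {X2 : PreHilbMod M2} (κ : X1.X → X2.X)
    (κ_add : ∀ x y, κ (x + y) = κ x + κ y)
    (κ_bdd : ∃ C : ℝ, ∀ x, X2.modNorm (κ x) ≤ C * X1.modNorm x)
    (κ_mod : ∀ x, ∀ b ∈ M1, κ (X1.act x b) = X2.act (κ x) (φ b))
    (c1 : SelfDualCompletion X1) (c2 : SelfDualCompletion X2) :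
    ∃ k : c1.Y.X → c2.Y.X,
      (∀ x y, k (x + y) = k x + k y) ∧ (∀ (c : ℂ) x, k (c • x) = c • k x) ∧
      (∀ y, ∀ b ∈ M1, k (c1.Y.act y b) = c2.Y.act (k y) (φ b)) ∧
      (∀ x, k (c1.ι x) = c2.ι (κ x)) ∧
      (∀ C : ℝ, 0 ≤ C → (∀ x, X2.modNorm (κ x) ≤ C * X1.modNorm x) →
        ∀ y, c2.Y.modNorm (k y) ≤ C * c1.Y.modNorm y) := by
  have ex : ∀ C : ℝ, 0 ≤ C → (∀ x, X2.modNorm (κ x) ≤ C * X1.modNorm x) → ∀ z : c2.Y.X,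
      ∃ w, (∀ x, ψ (c2.Y.ip z (c2.ι (κ x))) = c1.Y.ip w (c1.ι x)) ∧
        c1.Y.modNorm w ≤ C * c2.Y.modNorm z := by
    intro C hC hb z
    refine ext_functional X1 hM1 c1 (fun x => ψ (c2.Y.ip z (c2.ι (κ x)))) ?_ ?_ ?_
      (C * c2.Y.modNorm z) (mul_nonneg hC (modNorm_nonneg _ _)) ?_
    · intro x y
      rw [κ_add, c2.ι_add, c2.Y.ip_add_right,
        I.hom'.map_add _ (c2.Y.ip_mem _ _) _ (c2.Y.ip_mem _ _)]
    · intro x b hb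
      rw [κ_mod _ _ hb, c2.ι_act _ _ (I.maps b hb), c2.Y.ip_act _ _ _ (I.maps b hb),
        I.hom'.map_mul _ (c2.Y.ip_mem _ _) _ (I.maps b hb), I.left_inv b hb]
    · intro x
      exact I.maps' _ (c2.Y.ip_mem _ _)
    · intro x
      rw [I.symm.norm_eq _ (c2.Y.ip_mem _ _)]
      refine (ip_norm_le c2.Y hM2 _ _).trans ?_
      rw [ι_modNorm]
      have := mul_le_mul_of_nonneg_left (hb x) (modNorm_nonneg c2.Y z)
      linarith
  obtain ⟨C0', hC0'⟩ := κ_bdd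
  have hC0 : ∀ x, X2.modNorm (κ x) ≤ |C0'| * X1.modNorm x := fun x =>
    (hC0' x).trans (mul_le_mul_of_nonneg_right (le_abs_self _) (modNorm_nonneg _ _))
  choose a ha ha0 using ex |C0'| (abs_nonneg _) hC0
  have habd : ∀ C : ℝ, 0 ≤ C → (∀ x, X2.modNorm (κ x) ≤ C * X1.modNorm x) →
      ∀ z, c1.Y.modNorm (a z) ≤ C * c2.Y.modNorm z := by
    intro C hC hb z
    obtain ⟨w, hw, hwn⟩ := ex C hC hb z
    have : a z = w := sdc_ext c1 fun x => by rw [← ha, ← hw]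
    rwa [this]
  have a_add : ∀ z z', a (z + z') = a z + a z' := by
    intro z z'
    refine sdc_ext c1 fun x => ?_
    rw [← ha, ip_add_left, ip_add_left, ← ha, ← ha,
      I.hom'.map_add _ (c2.Y.ip_mem _ _) _ (c2.Y.ip_mem _ _)]
  have a_smul : ∀ (r : ℂ) z, a (r • z) = r • a z := by
    intro r z
    refine sdc_ext c1 fun x => ?_
    rw [← ha, ip_smul_left, ip_smul_left, ← ha, I.hom'.map_smul _ _ (c2.Y.ip_mem _ _)]
  have a_act : ∀ z, ∀ b ∈ M2, a (c2.Y.act z b) = c1.Y.act (a z) (ψ b) := by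
    intro z b hb
    refine sdc_ext c1 fun x => ?_
    rw [← ha, ip_act_left _ _ _ _ hb, ip_act_left _ _ _ _ (I.maps' b hb), ← ha,
      I.hom'.map_mul _ (hM2.1 b hb) _ (c2.Y.ip_mem _ _), I.hom'.map_star b hb]
  have exk : ∀ y : c1.Y.X, ∃ w, ∀ z, φ (c1.Y.ip y (a z)) = c2.Y.ip w z := by
    intro y
    refine c2.selfDual _ ?_ ?_ ?_ ?_ ⟨c1.Y.modNorm y * |C0'|, ?_⟩
    · intro z z'
      rw [a_add, c1.Y.ip_add_right, I.hom.map_add _ (c1.Y.ip_mem _ _) _ (c1.Y.ip_mem _ _)]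
    · intro r z
      rw [a_smul, c1.Y.ip_smul_right, I.hom.map_smul _ _ (c1.Y.ip_mem _ _)]
    · intro z b hb
      rw [a_act _ _ hb, c1.Y.ip_act _ _ _ (I.maps' b hb),
        I.hom.map_mul _ (c1.Y.ip_mem _ _) _ (I.maps' b hb), I.right_inv b hb]
    · intro z
      exact I.maps _ (c1.Y.ip_mem _ _)
    · intro z
      rw [I.norm_eq _ (c1.Y.ip_mem _ _), mul_assoc]
      exact (ip_norm_le c1.Y hM1 _ _).trans
        (mul_le_mul_of_nonneg_left (ha0 z) (modNorm_nonneg c1.Y y))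
  choose k hk using exk
  refine ⟨k, ?_, ?_, ?_, ?_, ?_⟩
  · intro x y
    refine ip_ext_left _ fun z => ?_
    rw [← hk, ip_add_left, ip_add_left, ← hk, ← hk,
      I.hom.map_add _ (c1.Y.ip_mem _ _) _ (c1.Y.ip_mem _ _)]
  · intro r x
    refine ip_ext_left _ fun z => ?_
    rw [← hk, ip_smul_left, ip_smul_left, ← hk, I.hom.map_smul _ _ (c1.Y.ip_mem _ _)]
  · intro y b hb
    refine ip_ext_left _ fun z => ?_
    rw [← hk, ip_act_left _ _ _ _ hb, ip_act_left _ _ _ _ (I.maps b hb), ← hk,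
      I.hom.map_mul _ (hM1.1 b hb) _ (c1.Y.ip_mem _ _), I.hom.map_star b hb]
  · intro x
    refine ip_ext_left _ fun z => ?_
    rw [← hk, ← c1.Y.ip_star, ← ha, ← I.hom'.map_star _ (c2.Y.ip_mem _ _), c2.Y.ip_star,
      I.right_inv _ (c2.Y.ip_mem _ _)]
  · intro C hC hb y
    have h1 : c2.Y.modNorm (k y) ^ 2 ≤ c1.Y.modNorm y * (C * c2.Y.modNorm (k y)) := by
      rw [modNorm_sq, ← hk, I.norm_eq _ (c1.Y.ip_mem _ _)]
      exact (ip_norm_le c1.Y hM1 _ _).trans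
        (mul_le_mul_of_nonneg_left (habd C hC hb _) (modNorm_nonneg c1.Y y))
    have h2 := modNorm_nonneg c2.Y (k y)
    have h3 := mul_nonneg hC (modNorm_nonneg c1.Y y)
    by_contra hlt
    push Not at hlt
    nlinarith

end main


/-- Lemma 5.4, after Paschke: let `φ : B₁ → B₂` be a *-isomorphism
of von Neumann algebras, `X₁, X₂` pre-Hilbert modules over `B₁, B₂`, and
`κ : X₁ → X₂` a bounded linear map with `κ(x b) = κ(x) φ(b)`.  Then `κ` extends to a
unique bounded (`φ`-compatible) linear map `κ̄ : X̄₁ → X̄₂` of the self-dual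
completions; it satisfies `‖κ̄‖ = ‖κ‖` and `κ̄(x b) = κ̄(x) φ(b)`; and if `κ` is an
isometric surjection then so is `κ̄`. -/
theorem statement18 {Hb1 Hb2 : HilbS} (B1s : Set (B Hb1)) (B2s : Set (B Hb2))
    (hB1 : IsVNA B1s) (hB2 : IsVNA B2s)
    (h1B1 : (1 : B Hb1) ∈ B1s) (h1B2 : (1 : B Hb2) ∈ B2s)
    (φ : B Hb1 → B Hb2) (hφ : IsStarHomOn B1s 1 1 φ)
    (hφinj : InjOn φ B1s) (hφimg : φ '' B1s = B2s)
    (X1 : PreHilbMod B1s) (X2 : PreHilbMod B2s)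
    (κ : X1.X → X2.X)
    (κ_add : ∀ x y, κ (x + y) = κ x + κ y)
    (κ_smul : ∀ (c : ℂ) (x), κ (c • x) = c • κ x)
    (κ_bdd : ∃ C : ℝ, ∀ x, X2.modNorm (κ x) ≤ C * X1.modNorm x)
    (κ_mod : ∀ x, ∀ b ∈ B1s, κ (X1.act x b) = X2.act (κ x) (φ b))
    (c1 : SelfDualCompletion X1) (c2 : SelfDualCompletion X2) :
    ∃ κb : c1.Y.X → c2.Y.X,
      ((∀ x y, κb (x + y) = κb x + κb y) ∧
       (∀ (c : ℂ) (x), κb (c • x) = c • κb x) ∧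
       (∃ C : ℝ, ∀ y, c2.Y.modNorm (κb y) ≤ C * c1.Y.modNorm y) ∧
       (∀ y, ∀ b ∈ B1s, κb (c1.Y.act y b) = c2.Y.act (κb y) (φ b)) ∧
       (∀ x, κb (c1.ι x) = c2.ι (κ x)) ∧
       mapNorm c1.Y c2.Y κb = mapNorm X1 X2 κ ∧
       (((∀ x, X2.modNorm (κ x) = X1.modNorm x) ∧ Function.Surjective κ) →
         ((∀ y, c2.Y.modNorm (κb y) = c1.Y.modNorm y) ∧ Function.Surjective κb))) ∧
      (∀ κb' : c1.Y.X → c2.Y.X,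
        ((∀ x y, κb' (x + y) = κb' x + κb' y) ∧
         (∀ (c : ℂ) (x), κb' (c • x) = c • κb' x) ∧
         (∃ C : ℝ, ∀ y, c2.Y.modNorm (κb' y) ≤ C * c1.Y.modNorm y) ∧
         (∀ y, ∀ b ∈ B1s, κb' (c1.Y.act y b) = c2.Y.act (κb' y) (φ b)) ∧
         (∀ x, κb' (c1.ι x) = c2.ι (κ x))) → κb' = κb) := by
  obtain ⟨ψ, I⟩ := exists_viso hB1 φ hφ hφinj hφimg
  obtain ⟨k, k_add, k_smul, k_mod, k_ext, k_bd⟩ :=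
    ext_exists hB1 hB2 I κ κ_add κ_bdd κ_mod c1 c2
  have k_bdd : ∃ C : ℝ, ∀ y, c2.Y.modNorm (k y) ≤ C * c1.Y.modNorm y := by
    obtain ⟨C, hC⟩ := κ_bdd
    exact ⟨|C|, k_bd |C| (abs_nonneg _) fun x =>
      (hC x).trans (mul_le_mul_of_nonneg_right (le_abs_self _) (modNorm_nonneg _ _))⟩
  refine ⟨k, ⟨k_add, k_smul, k_bdd, k_mod, k_ext, ?_, ?_⟩, ?_⟩
  · unfold mapNorm
    congr 1
    ext C
    refine ⟨fun h => ⟨h.1, fun x => ?_⟩, fun h => ⟨h.1, k_bd C h.1 h.2⟩⟩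
    have := h.2 (c1.ι x)
    rwa [k_ext, ι_modNorm, ι_modNorm] at this
  · rintro ⟨hiso, hsurj⟩
    have κ_neg : ∀ x y, κ (x - y) = κ x - κ y := fun x y =>
      map_sub (AddMonoidHom.mk' κ κ_add) x y
    have hinj : Function.Injective κ := by
      intro x y hxy
      refine sub_eq_zero.1 (X1.ip_defin _ ?_)
      have h1 : X1.modNorm (x - y) = 0 := by
        rw [← hiso, κ_neg, hxy, sub_self]
        have : X2.ip 0 0 = 0 := by
          have := X2.ip_smul_right 0 0 0
          simpa using this
        unfold PreHilbMod.modNorm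
        rw [this]
        simp
      have h2 := modNorm_sq X1 (x - y)
      rw [h1] at h2
      exact norm_eq_zero.1 (by simpa using h2.symm)
    obtain ⟨μ, hμ⟩ := hsurj.hasRightInverse
    have μκ : ∀ x, μ (κ x) = x := fun x => hinj (hμ _)
    have μ_iso : ∀ x, X1.modNorm (μ x) = X2.modNorm x := fun x => by rw [← hiso, hμ]
    obtain ⟨m, m_add, m_smul, m_mod, m_ext, m_bd⟩ :=
      ext_exists hB2 hB1 I.symm μ
        (fun x y => hinj (by rw [κ_add, hμ, hμ, hμ]))
        ⟨1, fun x => by rw [μ_iso, one_mul]⟩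
        (fun x b hb => hinj (by
          rw [κ_mod _ _ (I.maps' b hb), hμ, hμ, I.right_inv b hb]))
        c2 c1
    have k1 : ∀ y, c2.Y.modNorm (k y) ≤ 1 * c1.Y.modNorm y :=
      k_bd 1 zero_le_one fun x => by rw [hiso, one_mul]
    have m1 : ∀ y, c1.Y.modNorm (m y) ≤ 1 * c2.Y.modNorm y :=
      m_bd 1 zero_le_one fun x => by rw [μ_iso, one_mul]
    have hmk : (fun y => m (k y)) = id := by
      refine ext_unique hB1 (viso_id B1s) c1 c1.Y _ _ ?_ ?_ ⟨1, fun y => ?_⟩ ?_ ?_ ?_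
        ⟨1, fun y => ?_⟩ ?_ ?_
      · intro x y
        simp only [k_add, m_add]
      · intro c x
        simp only [k_smul, m_smul]
      · have h1 := k1 y
        have h2 := m1 (k y)
        rw [one_mul] at *
        exact h2.trans h1
      · intro y b hb
        simp only [k_mod _ _ hb, m_mod _ _ (I.maps b hb), I.left_inv b hb, id]
      · intro x y
        rfl
      · intro c x
        rfl
      · simp
      · intro y b hb
        rfl
      · intro x
        simp only [k_ext, m_ext, μκ, id]
    have hkm : (fun y => k (m y)) = id := by
      refine ext_unique hB2 (viso_id B2s) c2 c2.Y _ _ ?_ ?_ ⟨1, fun y => ?_⟩ ?_ ?_ ?_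
        ⟨1, fun y => ?_⟩ ?_ ?_
      · intro x y
        simp only [k_add, m_add]
      · intro c x
        simp only [k_smul, m_smul]
      · have h1 := m1 y
        have h2 := k1 (m y)
        rw [one_mul] at *
        exact h2.trans h1
      · intro y b hb
        simp only [m_mod _ _ hb, k_mod _ _ (I.maps' b hb), I.right_inv b hb, id]
      · intro x y
        rfl
      · intro c x
        rfl
      · simp
      · intro y b hb
        rfl
      · intro x
        simp only [k_ext, m_ext, hμ x, id]
    refine ⟨fun y => le_antisymm (by simpa using k1 y) ?_, fun z => ⟨m z, congrFun hkm z⟩⟩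
    have h := m1 (k y)
    rwa [show m (k y) = y from congrFun hmk y, one_mul] at h
  · rintro k' ⟨h1, h2, h3, h4, h5⟩
    exact ext_unique hB2 I c1 c2.Y k' k h1 h2 h3 h4 k_add k_smul k_bdd k_mod
      fun x => by rw [h5, k_ext]

end Paper
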